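/- Trace theorem: there is a constant C > 0, depending only on n, d, and C₀, such that for every u ∈ W the following hold. For σ-almost every x ∈ Γ the limit Tu(x) := lim_{ρ→0} ⨍_{B(x,ρ)} u(y) dy exists; moreover, for σ-almost every x ∈ Γ, lim_{ρ→0} ⨍_{B(x,ρ)} |u(y) − Tu(x)| dy = 0; and the trace satisfies ∫_Γ ∫_Γ |Tu(x) − Tu(y)|² |x−y|^{−d−1} dσ(x) dσ(y) ≤ C ∫_Ω |∇u|² dm. -/

import Mathlib

open MeasureTheory Metric Set Filter
open scoped ENNReal NNReal Topology

noncomputable section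

/-- Euclidean space `ℝⁿ`. -/
abbrev Euc (n : ℕ) := EuclideanSpace ℝ (Fin n)

/-- `Γ ⊆ ℝⁿ` is `d`-Ahlfors regular with constant `C₀`. -/
def AhlforsRegular (n : ℕ) (d C₀ : ℝ) (Γ : Set (Euc n)) : Prop :=
  ∀ x ∈ Γ, ∀ r : ℝ, 0 < r →
    ENNReal.ofReal (C₀⁻¹ * r ^ d) ≤ μH[d] (Γ ∩ ball x r) ∧
      μH[d] (Γ ∩ ball x r) ≤ ENNReal.ofReal (C₀ * r ^ d)

/-- The weight `w(x) = dist(x, Γ) ^ (d + 1 - n)`. -/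
def weightW (n : ℕ) (d : ℝ) (Γ : Set (Euc n)) (x : Euc n) : ℝ :=
  infDist x Γ ^ (d + 1 - (n : ℝ))

/-- The measure `m` with density `w` with respect to Lebesgue measure. -/
def measW (n : ℕ) (d : ℝ) (Γ : Set (Euc n)) : Measure (Euc n) :=
  volume.withDensity fun x => ENNReal.ofReal (weightW n d Γ x)

/-- `v` is a distributional gradient of `u` on the open set `E`: for every smooth
compactly supported test function `φ` with support in `E`, `∫_E u ∇φ = -∫_E φ v`. -/
def IsDistribGradOn {n : ℕ} (u : Euc n → ℝ) (v : Euc n → Euc n) (E : Set (Euc n)) : Prop :=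
  ∀ φ : Euc n → ℝ, ContDiff ℝ (⊤ : ℕ∞) φ → HasCompactSupport φ → tsupport φ ⊆ E →
    ∫ x in E, u x • gradient φ x = -∫ x in E, φ x • v x

/-- The averages of `u` over small balls centered at `x` converge to `t`. -/
def HasTraceAt {n : ℕ} (u : Euc n → ℝ) (x : Euc n) (t : ℝ) : Prop :=
  Tendsto (fun ρ : ℝ => ⨍ y in ball x ρ, u y) (𝓝[>] (0 : ℝ)) (𝓝 t)

/-- `u` belongs to the weighted Sobolev space `W = Ẇ^{1,2}_w(Ω)`, `Ω = Γᶜ`, with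
distributional gradient `v` on `Ω` lying in `L²(Ω, m)`. -/
structure MemW (n : ℕ) (d : ℝ) (Γ : Set (Euc n)) (u : Euc n → ℝ) (v : Euc n → Euc n) :
    Prop where
  locInt : LocallyIntegrableOn u Γᶜ volume
  gradLocInt : LocallyIntegrableOn v Γᶜ volume
  isGrad : IsDistribGradOn u v Γᶜ
  l2 : ∫⁻ x in Γᶜ, ENNReal.ofReal (‖v x‖ ^ 2) ∂(measW n d Γ) < ⊤

/-- `u` belongs to the local space `W_r(E)`: `u ∈ L¹_loc(E)` and `φ u` (extended by `0`)
belongs to `W` for every smooth compactly supported `φ` with support in `E`. -/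
def MemWrOn (n : ℕ) (d : ℝ) (Γ : Set (Euc n)) (E : Set (Euc n)) (u : Euc n → ℝ) : Prop :=
  LocallyIntegrableOn u E volume ∧
    ∀ φ : Euc n → ℝ, ContDiff ℝ (⊤ : ℕ∞) φ → HasCompactSupport φ → tsupport φ ⊆ E →
      ∃ vφ : Euc n → Euc n, MemW n d Γ (fun x => φ x * u x) vφ

/-- Degenerate ellipticity and boundedness conditions for the matrix `A`. -/
def EllipticOn (n : ℕ) (d : ℝ) (Γ : Set (Euc n)) (A : Euc n → Euc n →L[ℝ] Euc n)
    (C₁ : ℝ) : Prop :=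
  ∀ x, x ∉ Γ →
    (∀ ξ ζ : Euc n, |∑ i, A x ξ i * ζ i| ≤ C₁ * weightW n d Γ x * ‖ξ‖ * ‖ζ‖) ∧
      ∀ ξ : Euc n, C₁⁻¹ * weightW n d Γ x * ‖ξ‖ ^ 2 ≤ ∑ i, A x ξ i * ξ i

/-- `u`, with gradient `v`, is a weak subsolution of `- div A ∇u = 0` on `U ⊆ Ω = Γᶜ`. -/
def SubsolOn {n : ℕ} (Γ : Set (Euc n)) (A : Euc n → Euc n →L[ℝ] Euc n)
    (v : Euc n → Euc n) (U : Set (Euc n)) : Prop :=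
  ∀ φ : Euc n → ℝ, ContDiff ℝ (⊤ : ℕ∞) φ → HasCompactSupport φ → tsupport φ ⊆ U →
    (∀ x, 0 ≤ φ x) → ∫ x in Γᶜ, ∑ i, A x (v x) i * gradient φ x i ≤ 0

/-- `u`, with gradient `v`, is a weak supersolution of `- div A ∇u = 0` on `U ⊆ Ω = Γᶜ`. -/
def SupersolOn {n : ℕ} (Γ : Set (Euc n)) (A : Euc n → Euc n →L[ℝ] Euc n)
    (v : Euc n → Euc n) (U : Set (Euc n)) : Prop :=
  ∀ φ : Euc n → ℝ, ContDiff ℝ (⊤ : ℕ∞) φ → HasCompactSupport φ → tsupport φ ⊆ U →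
    (∀ x, 0 ≤ φ x) → 0 ≤ ∫ x in Γᶜ, ∑ i, A x (v x) i * gradient φ x i

/-- `u`, with gradient `v`, is a weak solution of `- div A ∇u = 0` on `U ⊆ Ω = Γᶜ`. -/
def SolOn {n : ℕ} (Γ : Set (Euc n)) (A : Euc n → Euc n →L[ℝ] Euc n)
    (v : Euc n → Euc n) (U : Set (Euc n)) : Prop :=
  ∀ φ : Euc n → ℝ, ContDiff ℝ (⊤ : ℕ∞) φ → HasCompactSupport φ → tsupport φ ⊆ U →
    ∫ x in Γᶜ, ∑ i, A x (v x) i * gradient φ x i = 0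

/-!
The mean oscillation of `u` over balls shrinking dyadically to a point `x ∈ Γ` is controlled, by the
Poincaré inequality, by scaled energies of `∇u`. When these are summable, `x` has a Lebesgue value
`Tu(x)`, and `|Tu(x) - Tu(y)|²` is at most a sum over `j` of energies on the balls of radius
comparable to `|x - y| / 2^j` about `x` and `y`; a Cauchy–Schwarz inequality with weights `(3/2)^j`
keeps this sum convergent. Integrating against `|x - y|^(-d-1) dσ dσ` and exchanging the order of
integration, the growth bound `σ(B(z, r)) ≲ r^d` leaves exactly the weight `δ(z)^(d+1-n)` on
`|∇u(z)|²`.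

The Poincaré inequality holds across `Γ` although `∇u` is only a gradient off `Γ`: it follows from
the translation bound `∫_B |u(y + h) - u(y)| dy ≤ |h| ∫_{B'} |∇u|`. As `H^(n-1)(Γ) = 0`, almost
every line in the direction `h` misses `Γ`, so it suffices to mollify `u` and to apply the
fundamental theorem of calculus along the segments that stay away from `Γ`.
-/

section CauchySchwarz

theorem lintegral_mul_sq_le {α : Type*} [MeasurableSpace α] {μ : Measure α} {f g : α → ℝ≥0∞}
    (hf : AEMeasurable f μ) (hg : AEMeasurable g μ) :
    (∫⁻ x, f x * g x ∂μ) ^ 2 ≤ (∫⁻ x, f x ^ 2 ∂μ) * ∫⁻ x, g x ^ 2 ∂μ := by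
  have holder := ENNReal.lintegral_mul_le_Lp_mul_Lq μ Real.HolderConjugate.two_two hf hg
  simp only [Pi.mul_apply, ENNReal.rpow_ofNat] at holder
  calc (∫⁻ x, f x * g x ∂μ) ^ 2
      ≤ ((∫⁻ x, f x ^ 2 ∂μ) ^ (1 / (2 : ℝ)) * (∫⁻ x, g x ^ 2 ∂μ) ^ (1 / (2 : ℝ))) ^ 2 := by
        gcongr
    _ = (∫⁻ x, f x ^ 2 ∂μ) * ∫⁻ x, g x ^ 2 ∂μ := by
        rw [mul_pow, ← ENNReal.rpow_mul_natCast, ← ENNReal.rpow_mul_natCast]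
        norm_num

theorem setLIntegral_sq_le {α : Type*} [MeasurableSpace α] {μ : Measure α} {s : Set α}
    {f : α → ℝ≥0∞} (hf : AEMeasurable f μ) :
    (∫⁻ x in s, f x ∂μ) ^ 2 ≤ μ s * ∫⁻ x in s, f x ^ 2 ∂μ := by
  simpa using lintegral_mul_sq_le (μ := μ.restrict s) (f := 1) aemeasurable_const hf.restrict

theorem tsum_mul_sq_le {ι : Type*} (a b : ι → ℝ≥0∞) :
    (∑' i, a i * b i) ^ 2 ≤ (∑' i, a i ^ 2) * ∑' i, b i ^ 2 := by
  let : MeasurableSpace ι := ⊤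
  simpa only [lintegral_count] using
    lintegral_mul_sq_le (μ := Measure.count) (measurable_from_top (f := a)).aemeasurable
      (measurable_from_top (f := b)).aemeasurable

theorem tsum_sq_le_of_geometric {q : ℝ} (hq : 1 < q) (a : ℕ → ℝ≥0∞) :
    (∑' j, a j) ^ 2 ≤
      ENNReal.ofReal (1 - q⁻¹)⁻¹ * ∑' j, ENNReal.ofReal (q ^ j) * a j ^ 2 := by
  have hq0 : 0 < q := one_pos.trans hq
  have split (j : ℕ) : a j = ENNReal.ofReal √(q⁻¹ ^ j) * (ENNReal.ofReal √(q ^ j) * a j) := by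
    rw [← mul_assoc, ← ENNReal.ofReal_mul (by positivity), ← Real.sqrt_mul (by positivity),
      inv_pow, inv_mul_cancel₀ (by positivity), Real.sqrt_one, ENNReal.ofReal_one, one_mul]
  have geometric : ∑' j : ℕ, ENNReal.ofReal √(q⁻¹ ^ j) ^ 2 = ENNReal.ofReal (1 - q⁻¹)⁻¹ := by
    rw [← tsum_geometric_of_lt_one (by positivity) (inv_lt_one_of_one_lt₀ hq),
      ENNReal.ofReal_tsum_of_nonneg (fun j => by positivity)
        (summable_geometric_of_lt_one (by positivity) (inv_lt_one_of_one_lt₀ hq))]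
    simp_rw [← ENNReal.ofReal_pow (Real.sqrt_nonneg _),
      Real.sq_sqrt (pow_nonneg (inv_nonneg.2 hq0.le) _)]
  calc (∑' j, a j) ^ 2
      = (∑' j, ENNReal.ofReal √(q⁻¹ ^ j) * (ENNReal.ofReal √(q ^ j) * a j)) ^ 2 := by
        simp_rw [← split]
    _ ≤ (∑' j : ℕ, ENNReal.ofReal √(q⁻¹ ^ j) ^ 2) * ∑' j, (ENNReal.ofReal √(q ^ j) * a j) ^ 2 :=
        tsum_mul_sq_le _ _
    _ = ENNReal.ofReal (1 - q⁻¹)⁻¹ * ∑' j, ENNReal.ofReal (q ^ j) * a j ^ 2 := by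
        simp_rw [geometric, mul_pow, ← ENNReal.ofReal_pow (Real.sqrt_nonneg _),
          Real.sq_sqrt (pow_nonneg hq0.le _)]

end CauchySchwarz

section UpperRegular

variable {X : Type*} [PseudoMetricSpace X] [MeasurableSpace X]

/-- Upper Ahlfors regularity of a measure: `σ (B(z, r)) ≤ A r ^ d` for all balls, including those
not centred on the support. -/
def UpperRegular (σ : Measure X) (A : ℝ≥0) (d : ℝ) : Prop :=
  ∀ (z : X) (r : ℝ), 0 < r → σ (ball z r) ≤ A * ENNReal.ofReal r ^ d

/-- The constant in the tail estimate `∫_{dist x z ≥ s} dist x z ^ (-a) dσ ≤ C s ^ (d - a)` for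
measures with `UpperRegular σ A d`; it is finite when `d < a`. -/
def tailConst (A : ℝ≥0) (d a : ℝ) : ℝ≥0∞ := A * 2 ^ d * (1 - 2 ^ (d - a))⁻¹

theorem tailConst_ne_top (A : ℝ≥0) {d a : ℝ} (hda : d < a) : tailConst A d a ≠ ∞ := by
  have ratio_lt_one : (2 : ℝ≥0∞) ^ (d - a) < 1 :=
    ENNReal.rpow_lt_one_of_one_lt_of_neg ENNReal.one_lt_two (sub_neg.2 hda)
  refine ENNReal.mul_ne_top (ENNReal.mul_ne_top ENNReal.coe_ne_top ?_) ?_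
  · exact ENNReal.rpow_ne_top_of_ne_zero two_ne_zero ENNReal.ofNat_ne_top
  · exact ENNReal.inv_ne_top.2 (tsub_pos_of_lt ratio_lt_one).ne'

namespace UpperRegular

variable {σ : Measure X} {A : ℝ≥0} {d : ℝ}

theorem measure_ball_lt_top (hσ : UpperRegular σ A d) (z : X) {r : ℝ} (hr : 0 < r) :
    σ (ball z r) < ∞ :=
  (hσ z r hr).trans_lt <| ENNReal.mul_lt_top ENNReal.coe_lt_top
    (ENNReal.rpow_ne_top_of_ne_zero (by simpa using hr) ENNReal.ofReal_ne_top).lt_top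

theorem isLocallyFiniteMeasure (hσ : UpperRegular σ A d) : IsLocallyFiniteMeasure σ :=
  ⟨fun z => ⟨ball z 1, ball_mem_nhds z one_pos, hσ.measure_ball_lt_top z one_pos⟩⟩

theorem nullSingletonClass (hσ : UpperRegular σ A d) (hd : 0 < d) : NullSingletonClass σ := by
  refine ⟨fun x => ?_⟩
  have bound_tendsto :
      Tendsto (fun r : ℝ => A * ENNReal.ofReal r ^ d) (𝓝[>] 0) (𝓝 (A * ENNReal.ofReal 0 ^ d)) :=
    (ENNReal.Tendsto.const_mul
      ((ENNReal.continuous_rpow_const.comp ENNReal.continuous_ofReal).tendsto 0)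
      (Or.inr ENNReal.coe_ne_top)).mono_left nhdsWithin_le_nhds
  rw [ENNReal.ofReal_zero, ENNReal.zero_rpow_of_pos hd, mul_zero] at bound_tendsto
  refine nonpos_iff_eq_zero.1 (ge_of_tendsto bound_tendsto ?_)
  filter_upwards [self_mem_nhdsWithin] with r hr
  exact (measure_mono (singleton_subset_iff.2 (mem_ball_self hr))).trans (hσ x r hr)

theorem setLIntegral_annulus_le (hσ : UpperRegular σ A d) {a : ℝ} (ha : 0 ≤ a) (z : X)
    {s : ℝ} (hs : 0 < s) :
    ∫⁻ x in {x | s ≤ dist x z} ∩ ball z (2 * s), edist x z ^ (-a) ∂σ ≤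
      A * 2 ^ d * ENNReal.ofReal s ^ (d - a) := by
  have hs0 : ENNReal.ofReal s ≠ 0 := by simpa using hs
  have kernel_le (x : X) (hx : x ∈ {x | s ≤ dist x z} ∩ ball z (2 * s)) :
      edist x z ^ (-a) ≤ ENNReal.ofReal s ^ (-a) := by
    rw [ENNReal.rpow_neg, ENNReal.rpow_neg, ENNReal.inv_le_inv, edist_dist]
    exact ENNReal.rpow_le_rpow (ENNReal.ofReal_le_ofReal hx.1) ha
  calc ∫⁻ x in {x | s ≤ dist x z} ∩ ball z (2 * s), edist x z ^ (-a) ∂σ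
      ≤ ENNReal.ofReal s ^ (-a) * σ ({x | s ≤ dist x z} ∩ ball z (2 * s)) :=
        (setLIntegral_mono measurable_const kernel_le).trans_eq (setLIntegral_const _ _)
    _ ≤ ENNReal.ofReal s ^ (-a) * (A * ENNReal.ofReal (2 * s) ^ d) := by
        gcongr
        exact (measure_mono inter_subset_right).trans (hσ z _ (by positivity))
    _ = A * 2 ^ d * ENNReal.ofReal s ^ (d - a) := by
        rw [ENNReal.ofReal_mul zero_le_two, ENNReal.ofReal_ofNat,
          ENNReal.mul_rpow_of_ne_zero two_ne_zero hs0, sub_eq_add_neg,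
          ENNReal.rpow_add _ _ hs0 ENNReal.ofReal_ne_top]
        ring

theorem setLIntegral_edist_rpow_neg_le (hσ : UpperRegular σ A d) {a : ℝ} (ha : 0 ≤ a) (z : X)
    {s : ℝ} (hs : 0 < s) :
    ∫⁻ x in {x | s ≤ dist x z}, edist x z ^ (-a) ∂σ ≤
      tailConst A d a * ENNReal.ofReal s ^ (d - a) := by
  have cover : {x | s ≤ dist x z} ⊆
      ⋃ j : ℕ, {x | 2 ^ j * s ≤ dist x z} ∩ ball z (2 * (2 ^ j * s)) := by
    intro x (hx : s ≤ dist x z)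
    obtain ⟨j, hj, hj'⟩ := exists_nat_pow_near ((one_le_div hs).2 hx) one_lt_two
    refine mem_iUnion.2 ⟨j, (le_div_iff₀ hs).1 hj, ?_⟩
    rw [mem_ball, ← mul_assoc, ← pow_succ']
    exact (div_lt_iff₀ hs).1 hj'
  have dilate (j : ℕ) : ENNReal.ofReal (2 ^ j * s) ^ (d - a) =
      (2 ^ (d - a)) ^ j * ENNReal.ofReal s ^ (d - a) := by
    rw [ENNReal.ofReal_mul (by positivity), ENNReal.ofReal_pow zero_le_two, ENNReal.ofReal_ofNat,
      ENNReal.mul_rpow_of_ne_top (by simp) ENNReal.ofReal_ne_top, ← ENNReal.rpow_natCast_mul,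
      ← ENNReal.rpow_mul_natCast, mul_comm (j : ℝ)]
  calc ∫⁻ x in {x | s ≤ dist x z}, edist x z ^ (-a) ∂σ
      ≤ ∑' j : ℕ, ∫⁻ x in {x | 2 ^ j * s ≤ dist x z} ∩ ball z (2 * (2 ^ j * s)),
          edist x z ^ (-a) ∂σ := (lintegral_mono_set cover).trans (lintegral_iUnion_le _ _)
    _ ≤ ∑' j : ℕ, A * 2 ^ d * ENNReal.ofReal (2 ^ j * s) ^ (d - a) :=
        ENNReal.tsum_le_tsum fun j => hσ.setLIntegral_annulus_le ha z (by positivity)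
    _ = tailConst A d a * ENNReal.ofReal s ^ (d - a) := by
        simp_rw [dilate, ENNReal.tsum_mul_left, ENNReal.tsum_mul_right, ENNReal.tsum_geometric,
          tailConst, mul_assoc]

end UpperRegular

end UpperRegular

section Kernel

variable {X : Type*} [PseudoMetricSpace X] [MeasurableSpace X]

/-- The scale-invariant energy `r ^ (1 - s) ∫_{B(x, r)} f dμ`; on `ℝⁿ` with `s = n - 1` and
`f = |∇u| ^ 2` it controls the squared mean oscillation of `u` on the ball. -/
def scaledEnergy (μ : Measure X) (s : ℝ) (f : X → ℝ≥0∞) (x : X) (r : ℝ) : ℝ≥0∞ :=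
  ENNReal.ofReal r ^ (1 - s) * ∫⁻ z in ball x r, f z ∂μ

variable {σ μ : Measure X} {A : ℝ≥0} {d s κ : ℝ}

theorem edist_rpow_mul_scaledEnergy (hκ : 0 < κ) {f : X → ℝ≥0∞} (hf : Measurable f) (x y : X) :
    edist x y ^ (-(d + 1)) * scaledEnergy μ s f x (κ * dist x y) =
      ∫⁻ z in ball x (κ * dist x y),
        ENNReal.ofReal κ ^ (1 - s) * edist x y ^ (-(d + s)) * f z ∂μ := by
  rcases eq_or_ne (edist x y) 0 with hxy | hxy
  · simp [scaledEnergy, dist_edist, hxy]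
  have exponents : edist x y ^ (-(d + 1)) * edist x y ^ (1 - s) = edist x y ^ (-(d + s)) := by
    rw [← ENNReal.rpow_add _ _ hxy (edist_ne_top x y)]
    ring_nf
  rw [lintegral_const_mul _ hf, scaledEnergy, ENNReal.ofReal_mul hκ.le, ← edist_dist,
    ENNReal.mul_rpow_of_ne_top ENNReal.ofReal_ne_top (edist_ne_top x y), ← exponents]
  ring

theorem UpperRegular.setLIntegral_far_le (hσ : UpperRegular σ A d) (hκ : 0 < κ) (hds : 0 ≤ d + s)
    {x z : X} (hxz : 0 < dist x z) :
    ∫⁻ y in {y | dist z x < κ * dist x y}, edist x y ^ (-(d + s)) ∂σ ≤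
      tailConst A d (d + s) * ENNReal.ofReal κ ^ s * edist x z ^ (-s) := by
  have far_subset : {y | dist z x < κ * dist x y} ⊆ {y | κ⁻¹ * dist x z ≤ dist y x} := by
    intro y (hy : dist z x < κ * dist x y)
    rw [dist_comm x y, dist_comm z x] at hy
    exact ((inv_mul_lt_iff₀ hκ).2 hy).le
  calc ∫⁻ y in {y | dist z x < κ * dist x y}, edist x y ^ (-(d + s)) ∂σ
      ≤ ∫⁻ y in {y | κ⁻¹ * dist x z ≤ dist y x}, edist y x ^ (-(d + s)) ∂σ := by
        simp_rw [edist_comm x]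
        exact lintegral_mono_set far_subset
    _ ≤ tailConst A d (d + s) * ENNReal.ofReal (κ⁻¹ * dist x z) ^ (d - (d + s)) :=
        hσ.setLIntegral_edist_rpow_neg_le hds x (by positivity)
    _ = tailConst A d (d + s) * ENNReal.ofReal κ ^ s * edist x z ^ (-s) := by
        rw [ENNReal.ofReal_mul (by positivity), ← edist_dist, ENNReal.ofReal_inv_of_pos hκ,
          ENNReal.mul_rpow_of_ne_top (by simpa using hκ) (edist_ne_top x z), sub_add_cancel_left,
          ENNReal.inv_rpow, ENNReal.rpow_neg, inv_inv, mul_assoc]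

/-- The constant of the kernel estimate `UpperRegular.lintegral_dyadicEnergy_le`. -/
def kernelConst (A : ℝ≥0) (d s : ℝ) : ℝ≥0∞ :=
  24 * (tailConst A d (d + s) * tailConst A d s)

theorem kernelConst_ne_top (A : ℝ≥0) (hs : 0 < s) (hds : d < s) : kernelConst A d s ≠ ∞ := by
  have := tailConst_ne_top A hds
  have := tailConst_ne_top A (lt_add_of_pos_right d hs)
  unfold kernelConst
  finiteness

variable [OpensMeasurableSpace X] [SecondCountableTopology X]

theorem measurableSet_dist_lt_mul_dist (κ : ℝ) :
    MeasurableSet {q : (X × X) × X | dist q.2 q.1.1 < κ * dist q.1.1 q.1.2} := by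
  measurability

theorem measurable_scaledEnergy_mul_dist [SFinite μ] {f : X → ℝ≥0∞} (hf : Measurable f) :
    Measurable fun p : X × X => scaledEnergy μ s f p.1 (κ * dist p.1 p.2) := by
  simp_rw [scaledEnergy, ← lintegral_indicator measurableSet_ball]
  exact Measurable.mul (by fun_prop) (Measurable.lintegral_prod_right'
    ((hf.comp measurable_snd).indicator (measurableSet_dist_lt_mul_dist κ)))

theorem UpperRegular.setLIntegral_prod_le [SFinite σ] (hσ : UpperRegular σ A d) (hκ : 0 < κ)
    (hds : 0 ≤ d + s) (hs : 0 ≤ s) {z : X} {δ : ℝ} (hδ : 0 < δ) (hz : ∀ᵐ x ∂σ, δ ≤ dist x z) :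
    ∫⁻ p in {p : X × X | dist z p.1 < κ * dist p.1 p.2}, edist p.1 p.2 ^ (-(d + s)) ∂σ.prod σ ≤
      tailConst A d (d + s) * tailConst A d s * ENNReal.ofReal κ ^ s *
        ENNReal.ofReal δ ^ (d - s) := by
  have hS : MeasurableSet {p : X × X | dist z p.1 < κ * dist p.1 p.2} := by measurability
  have hT : MeasurableSet {x : X | δ ≤ dist x z} := by measurability
  calc ∫⁻ p in {p : X × X | dist z p.1 < κ * dist p.1 p.2}, edist p.1 p.2 ^ (-(d + s)) ∂σ.prod σ
      = ∫⁻ x, ∫⁻ y in {y | dist z x < κ * dist x y}, edist x y ^ (-(d + s)) ∂σ ∂σ := by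
        rw [← lintegral_indicator hS, lintegral_prod _ (by fun_prop (disch := measurability))]
        refine lintegral_congr fun x => ?_
        rw [← lintegral_indicator (by measurability)]
        rfl
    _ = ∫⁻ x in {x | δ ≤ dist x z}, ∫⁻ y in {y | dist z x < κ * dist x y},
          edist x y ^ (-(d + s)) ∂σ ∂σ := by
        rw [Measure.restrict_eq_self_of_ae_mem (s := {x | δ ≤ dist x z}) hz]
    _ ≤ ∫⁻ x in {x | δ ≤ dist x z},
          tailConst A d (d + s) * ENNReal.ofReal κ ^ s * edist x z ^ (-s) ∂σ :=
        setLIntegral_mono' hT fun x hx => hσ.setLIntegral_far_le hκ hds (hδ.trans_le hx)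
    _ = tailConst A d (d + s) * ENNReal.ofReal κ ^ s *
          ∫⁻ x in {x | δ ≤ dist x z}, edist x z ^ (-s) ∂σ :=
        lintegral_const_mul _ (by fun_prop)
    _ ≤ tailConst A d (d + s) * ENNReal.ofReal κ ^ s *
          (tailConst A d s * ENNReal.ofReal δ ^ (d - s)) := by
        gcongr
        exact hσ.setLIntegral_edist_rpow_neg_le hs z hδ
    _ = _ := by ring

theorem lintegral_edist_rpow_mul_scaledEnergy [SFinite σ] [SFinite μ] (hκ : 0 < κ)
    {f : X → ℝ≥0∞} (hf : Measurable f) :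
    ∫⁻ p, edist p.1 p.2 ^ (-(d + 1)) * scaledEnergy μ s f p.1 (κ * dist p.1 p.2) ∂σ.prod σ =
      ∫⁻ z, f z * ENNReal.ofReal κ ^ (1 - s) *
        ∫⁻ p in {p : X × X | dist z p.1 < κ * dist p.1 p.2},
          edist p.1 p.2 ^ (-(d + s)) ∂σ.prod σ ∂μ := by
  let kernel (q : (X × X) × X) : ℝ≥0∞ :=
    ENNReal.ofReal κ ^ (1 - s) * edist q.1.1 q.1.2 ^ (-(d + s)) * f q.2
  let S : Set ((X × X) × X) := {q | dist q.2 q.1.1 < κ * dist q.1.1 q.1.2}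
  have measurable_kernel : Measurable (S.indicator kernel) :=
    Measurable.indicator (by fun_prop) (measurableSet_dist_lt_mul_dist κ)
  calc _ = ∫⁻ p, ∫⁻ z, S.indicator kernel (p, z) ∂μ ∂σ.prod σ := by
        refine lintegral_congr fun p => ?_
        rw [edist_rpow_mul_scaledEnergy hκ hf, ← lintegral_indicator measurableSet_ball]
        rfl
    _ = ∫⁻ z, ∫⁻ p, S.indicator kernel (p, z) ∂σ.prod σ ∂μ :=
        lintegral_lintegral_swap measurable_kernel.aemeasurable
    _ = _ := by
        refine lintegral_congr fun z => ?_
        rw [← lintegral_const_mul _ (by fun_prop), ← lintegral_indicator (by measurability)]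
        refine lintegral_congr fun p => ?_
        rw [← indicator_comp_right (f := fun p : X × X => (p, z))]
        refine congrFun (indicator_congr fun p _ => ?_) p
        simp only [Function.comp_apply, kernel]
        ring

theorem UpperRegular.lintegral_scaledEnergy_le [SFinite σ] [SFinite μ] (hσ : UpperRegular σ A d)
    (hκ : 0 < κ) (hds : 0 ≤ d + s) (hs : 0 ≤ s) {Γ : Set X} (hσΓ : ∀ᵐ x ∂σ, x ∈ Γ)
    (hμΓ : ∀ᵐ z ∂μ, 0 < infDist z Γ) {f : X → ℝ≥0∞} (hf : Measurable f) :
    ∫⁻ p, edist p.1 p.2 ^ (-(d + 1)) * scaledEnergy μ s f p.1 (κ * dist p.1 p.2) ∂σ.prod σ ≤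
      ENNReal.ofReal κ * (tailConst A d (d + s) * tailConst A d s *
        ∫⁻ z, f z * ENNReal.ofReal (infDist z Γ) ^ (d - s) ∂μ) := by
  have kappa_pow : ENNReal.ofReal κ ^ (1 - s) * ENNReal.ofReal κ ^ s = ENNReal.ofReal κ := by
    rw [← ENNReal.rpow_add _ _ (by simpa using hκ) ENNReal.ofReal_ne_top, sub_add_cancel,
      ENNReal.rpow_one]
  rw [lintegral_edist_rpow_mul_scaledEnergy hκ hf, ← mul_assoc,
    ← lintegral_const_mul _ (by fun_prop)]
  refine lintegral_mono_ae ?_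
  filter_upwards [hμΓ] with z hz
  have infDist_le : ∀ᵐ x ∂σ, infDist z Γ ≤ dist x z := by
    filter_upwards [hσΓ] with x hx
    rw [dist_comm]
    exact infDist_le_dist_of_mem hx
  calc f z * ENNReal.ofReal κ ^ (1 - s) *
        ∫⁻ p in {p : X × X | dist z p.1 < κ * dist p.1 p.2}, edist p.1 p.2 ^ (-(d + s)) ∂σ.prod σ
      ≤ f z * ENNReal.ofReal κ ^ (1 - s) * (tailConst A d (d + s) * tailConst A d s *
          ENNReal.ofReal κ ^ s * ENNReal.ofReal (infDist z Γ) ^ (d - s)) := by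
        gcongr
        exact hσ.setLIntegral_prod_le hκ hds hs hz infDist_le
    _ = f z * (ENNReal.ofReal κ ^ (1 - s) * ENNReal.ofReal κ ^ s) * (tailConst A d (d + s) *
          tailConst A d s * ENNReal.ofReal (infDist z Γ) ^ (d - s)) := by ring
    _ = ENNReal.ofReal κ * (tailConst A d (d + s) * tailConst A d s) *
          (f z * ENNReal.ofReal (infDist z Γ) ^ (d - s)) := by
        rw [kappa_pow]
        ring

/-- The weighted sum of scaled energies over the dyadic balls shrinking to `x` from scale
`6 * dist x y`. The weights grow (for Cauchy–Schwarz), but slower than the radii shrink. -/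
def dyadicEnergy (μ : Measure X) (s : ℝ) (f : X → ℝ≥0∞) (x y : X) : ℝ≥0∞ :=
  ∑' j : ℕ, ENNReal.ofReal ((3 / 2) ^ j) * scaledEnergy μ s f x (6 / 2 ^ j * dist x y)

theorem measurable_dyadicEnergy [SFinite μ] {f : X → ℝ≥0∞} (hf : Measurable f) :
    Measurable fun p : X × X => dyadicEnergy μ s f p.1 p.2 :=
  Measurable.tsum fun _ => (measurable_scaledEnergy_mul_dist hf).const_mul _

theorem tsum_dyadicEnergy_weights :
    ∑' j : ℕ, ENNReal.ofReal ((3 / 2) ^ j) * ENNReal.ofReal (6 / 2 ^ j) = 24 := by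
  have term (j : ℕ) : ENNReal.ofReal ((3 / 2) ^ j) * ENNReal.ofReal (6 / 2 ^ j) =
      ENNReal.ofReal (6 * (3 / 4) ^ j) := by
    rw [← ENNReal.ofReal_mul (by positivity), show (3 / 4 : ℝ) = 3 / 2 / 2 by norm_num,
      div_pow (3 / 2)]
    ring_nf
  have summable_ratio : Summable fun j : ℕ => (3 / 4 : ℝ) ^ j :=
    summable_geometric_of_lt_one (by norm_num) (by norm_num)
  simp_rw [term]
  rw [← ENNReal.ofReal_tsum_of_nonneg (fun _ => by positivity) (summable_ratio.mul_left 6),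
    tsum_mul_left, tsum_geometric_of_lt_one (by norm_num) (by norm_num)]
  norm_num

theorem UpperRegular.lintegral_dyadicEnergy_le [SFinite σ] [SFinite μ] (hσ : UpperRegular σ A d)
    (hds : 0 ≤ d + s) (hs : 0 ≤ s) {Γ : Set X} (hσΓ : ∀ᵐ x ∂σ, x ∈ Γ)
    (hμΓ : ∀ᵐ z ∂μ, 0 < infDist z Γ) {f : X → ℝ≥0∞} (hf : Measurable f) :
    ∫⁻ p, edist p.1 p.2 ^ (-(d + 1)) * dyadicEnergy μ s f p.1 p.2 ∂σ.prod σ ≤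
      kernelConst A d s * ∫⁻ z, f z * ENNReal.ofReal (infDist z Γ) ^ (d - s) ∂μ := by
  have measurable_term (j : ℕ) : Measurable fun p : X × X =>
      edist p.1 p.2 ^ (-(d + 1)) * scaledEnergy μ s f p.1 (6 / 2 ^ j * dist p.1 p.2) :=
    Measurable.mul (by fun_prop) (measurable_scaledEnergy_mul_dist hf)
  calc ∫⁻ p, edist p.1 p.2 ^ (-(d + 1)) * dyadicEnergy μ s f p.1 p.2 ∂σ.prod σ
      = ∑' j : ℕ, ENNReal.ofReal ((3 / 2) ^ j) * ∫⁻ p, edist p.1 p.2 ^ (-(d + 1)) *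
          scaledEnergy μ s f p.1 (6 / 2 ^ j * dist p.1 p.2) ∂σ.prod σ := by
        simp_rw [dyadicEnergy, ← ENNReal.tsum_mul_left,
          fun p : X × X => mul_left_comm (edist p.1 p.2 ^ (-(d + 1))),
          ← lintegral_const_mul _ (measurable_term _)]
        exact lintegral_tsum fun j => ((measurable_term j).const_mul _).aemeasurable
    _ ≤ ∑' j : ℕ, ENNReal.ofReal ((3 / 2) ^ j) * (ENNReal.ofReal (6 / 2 ^ j) *
          (tailConst A d (d + s) * tailConst A d s *
            ∫⁻ z, f z * ENNReal.ofReal (infDist z Γ) ^ (d - s) ∂μ)) := by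
        gcongr with j
        exact hσ.lintegral_scaledEnergy_le (by positivity) hds hs hσΓ hμΓ hf
    _ = _ := by
        simp_rw [← mul_assoc, ENNReal.tsum_mul_right, tsum_dyadicEnergy_weights, kernelConst,
          mul_assoc]

end Kernel

section MeanOscillation

theorem setLAverage_le_mul_setLAverage {α : Type*} [MeasurableSpace α] {μ : Measure α}
    {s t : Set α} {C : ℝ≥0∞} (hst : s ⊆ t) (ht : μ t ≠ ∞) (hμ : μ t ≤ C * μ s) (f : α → ℝ≥0∞) :
    ⨍⁻ x in s, f x ∂μ ≤ C * ⨍⁻ x in t, f x ∂μ := by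
  rw [setLAverage_eq]
  refine ENNReal.div_le_of_le_mul ?_
  calc ∫⁻ x in s, f x ∂μ ≤ μ t * ⨍⁻ x in t, f x ∂μ := by
        rw [measure_mul_setLAverage f ht]
        exact lintegral_mono_set hst
    _ ≤ C * (⨍⁻ x in t, f x ∂μ) * μ s := by
        rw [mul_right_comm]
        gcongr

open Module (finrank)

variable {E G : Type*} [NormedAddCommGroup E] [MeasurableSpace E] [NormedAddCommGroup G]

/-- The mean deviation `⨍_{B(x, r)} ‖u - t‖` of `u` from the constant `t`. -/
def meanDev (μ : Measure E) (u : E → G) (x : E) (r : ℝ) (t : G) : ℝ≥0∞ :=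
  ⨍⁻ y in ball x r, ‖u y - t‖ₑ ∂μ

/-- The mean oscillation of `u` on a ball, as a double average so that no mean value of `u`
enters. -/
def meanOsc (μ : Measure E) (u : E → G) (x : E) (r : ℝ) : ℝ≥0∞ :=
  ⨍⁻ y in ball x r, meanDev μ u x r (u y) ∂μ

/-- `x` is a Lebesgue point of `u`, with value `t`. Stated with lower integrals, so that no
integrability of `u` is presupposed. -/
def HasLebesgueValueAt (μ : Measure E) (u : E → G) (x : E) (t : G) : Prop :=
  Tendsto (fun ρ => meanDev μ u x ρ t) (𝓝[>] 0) (𝓝 0)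

variable {μ : Measure E} {u : E → G} {x y : E} {r ρ : ℝ} {s t : G}

theorem HasLebesgueValueAt.tendsto_setAverage_norm_sub
    (ht : HasLebesgueValueAt μ u x t) (hu : AEStronglyMeasurable u μ) :
    Tendsto (fun ρ => ⨍ y in ball x ρ, ‖u y - t‖ ∂μ) (𝓝[>] 0) (𝓝 0) := by
  refine ((ENNReal.tendsto_toReal ENNReal.zero_ne_top).comp ht).congr fun ρ => ?_
  rw [Function.comp_apply, meanDev, setLAverage_eq, ENNReal.toReal_div, setAverage_eq,
    integral_norm_eq_lintegral_enorm (f := fun y => u y - t)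
      (hu.restrict.sub aestronglyMeasurable_const), smul_eq_mul,
    Measure.real, div_eq_inv_mul]

variable [NormedSpace ℝ E] [FiniteDimensional ℝ E] [μ.IsAddHaarMeasure]

theorem meanDev_le_meanDev_add_enorm_sub (hr : 0 < r) :
    meanDev μ u x r t ≤ meanDev μ u x r s + ‖s - t‖ₑ := by
  have triangle (y : E) : ‖u y - t‖ₑ ≤ ‖u y - s‖ₑ + ‖s - t‖ₑ := by
    simpa only [edist_eq_enorm_sub] using edist_triangle (u y) s t
  calc meanDev μ u x r t ≤ ⨍⁻ y in ball x r, (‖u y - s‖ₑ + ‖s - t‖ₑ) ∂μ := lintegral_mono triangle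
    _ = meanDev μ u x r s + ⨍⁻ _ in ball x r, ‖s - t‖ₑ ∂μ :=
        lintegral_add_right _ measurable_const
    _ = meanDev μ u x r s + ‖s - t‖ₑ := by
        rw [setLAverage_const (measure_ball_pos μ x hr).ne' measure_ball_lt_top.ne]

theorem enorm_sub_le_meanDev_add_meanDev (hu : AEStronglyMeasurable u μ) (hr : 0 < r) :
    ‖t - s‖ₑ ≤ meanDev μ u x r t + meanDev μ u x r s := by
  have triangle (y : E) : ‖t - s‖ₑ ≤ ‖u y - t‖ₑ + ‖u y - s‖ₑ := by
    simpa only [edist_eq_enorm_sub] using edist_triangle_left t s (u y)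
  calc ‖t - s‖ₑ = ⨍⁻ _ in ball x r, ‖t - s‖ₑ ∂μ :=
        (setLAverage_const (measure_ball_pos μ x hr).ne' measure_ball_lt_top.ne _).symm
    _ ≤ ⨍⁻ y in ball x r, (‖u y - t‖ₑ + ‖u y - s‖ₑ) ∂μ := lintegral_mono triangle
    _ = meanDev μ u x r t + meanDev μ u x r s :=
        lintegral_add_left'
          ((hu.restrict.sub aestronglyMeasurable_const).enorm.smul_measure _) _

theorem exists_meanDev_le_meanOsc (hu : AEStronglyMeasurable u μ) (x : E) (hr : 0 < r) :
    ∃ t, meanDev μ u x r t ≤ meanOsc μ u x r := by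
  have aemeasurable_meanDev :
      AEMeasurable (fun y => meanDev μ u x r (u y)) (μ.restrict (ball x r)) := by
    simp_rw [meanDev, setLAverage_eq]
    refine AEMeasurable.div_const (AEMeasurable.lintegral_prod_right'
      (f := fun p : E × E => ‖u p.2 - u p.1‖ₑ) ?_) _
    exact (hu.restrict.comp_snd.sub hu.restrict.comp_fst).enorm
  obtain ⟨y, -, hy⟩ := exists_le_setLAverage (measure_ball_pos μ x hr).ne' measure_ball_lt_top.ne
    aemeasurable_meanDev
  exact ⟨u y, hy⟩

theorem eq_of_hasLebesgueValueAt (hu : AEStronglyMeasurable u μ)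
    (ht : HasLebesgueValueAt μ u x t) (hs : HasLebesgueValueAt μ u x s) : t = s := by
  have dist_le_zero : ‖t - s‖ₑ ≤ 0 + 0 := by
    refine ge_of_tendsto (ht.add hs) ?_
    filter_upwards [self_mem_nhdsWithin] with ρ hρ
    exact enorm_sub_le_meanDev_add_meanDev hu hρ
  rwa [add_zero, nonpos_iff_eq_zero, enorm_eq_zero, sub_eq_zero] at dist_le_zero

theorem HasLebesgueValueAt.tendsto_setAverage [NormedSpace ℝ G] [CompleteSpace G]
    (ht : HasLebesgueValueAt μ u x t) (hu : LocallyIntegrable u μ) :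
    Tendsto (fun ρ => ⨍ y in ball x ρ, u y ∂μ) (𝓝[>] 0) (𝓝 t) := by
  rw [tendsto_iff_norm_sub_tendsto_zero]
  refine squeeze_zero' (Eventually.of_forall fun _ => norm_nonneg _) ?_
    (ht.tendsto_setAverage_norm_sub hu.aestronglyMeasurable)
  filter_upwards [self_mem_nhdsWithin] with ρ (hρ : 0 < ρ)
  have ball_ne_zero : μ (ball x ρ) ≠ 0 := (measure_ball_pos μ x hρ).ne'
  have integrable_u : IntegrableOn u (ball x ρ) μ :=
    (hu.integrableOn_isCompact (isCompact_closedBall x ρ)).mono_set ball_subset_closedBall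
  have average_sub : (⨍ y in ball x ρ, u y ∂μ) - t = ⨍ y in ball x ρ, (u y - t) ∂μ := by
    rw [setAverage_eq, setAverage_eq,
      integral_sub integrable_u (integrableOn_const measure_ball_lt_top.ne), smul_sub,
      ← setAverage_eq _ fun _ => t, setAverage_const ball_ne_zero measure_ball_lt_top.ne]
  rw [average_sub]
  exact norm_integral_le_integral_norm _

variable [BorelSpace E]

theorem measure_ball_le_two_pow_mul (μ : Measure E) [μ.IsAddHaarMeasure] (x y : E)
    (hr : r ≤ 2 * ρ) : μ (ball x r) ≤ 2 ^ finrank ℝ E * μ (ball y ρ) :=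
  calc μ (ball x r) ≤ μ (ball x (2 * ρ)) := measure_mono (ball_subset_ball hr)
    _ = 2 ^ finrank ℝ E * μ (ball y ρ) := by
        rw [Measure.addHaar_ball_mul_of_pos μ x two_pos, Measure.addHaar_ball_center,
          ← Measure.addHaar_ball_center μ y, ENNReal.ofReal_pow zero_le_two, ENNReal.ofReal_ofNat]

theorem meanDev_le_of_ball_subset (hsub : ball y ρ ⊆ ball x r) (hr : r ≤ 2 * ρ) :
    meanDev μ u y ρ t ≤ 2 ^ finrank ℝ E * meanDev μ u x r t :=
  setLAverage_le_mul_setLAverage hsub measure_ball_lt_top.ne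
    (measure_ball_le_two_pow_mul μ x y hr) _

theorem enorm_sub_le_two_pow_mul_meanDev_add (hu : AEStronglyMeasurable u μ) (hr : 0 < r) :
    ‖t - s‖ₑ ≤ 2 ^ finrank ℝ E * meanDev μ u x (2 * r) t + meanDev μ u x r s :=
  (enorm_sub_le_meanDev_add_meanDev hu hr).trans <| by
    gcongr
    exact meanDev_le_of_ball_subset (ball_subset_ball (by linarith)) le_rfl

theorem hasLebesgueValueAt_of_dyadic (hr : 0 < r)
    (h : Tendsto (fun j : ℕ => meanDev μ u x (r / 2 ^ j) t) atTop (𝓝 0)) :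
    HasLebesgueValueAt μ u x t := by
  have doubled :
      Tendsto (fun j : ℕ => 2 ^ finrank ℝ E * meanDev μ u x (r / 2 ^ j) t) atTop (𝓝 0) := by
    simpa using ENNReal.Tendsto.const_mul h (Or.inr (ENNReal.pow_ne_top ENNReal.ofNat_ne_top))
  rw [ENNReal.tendsto_nhds_zero] at doubled
  rw [HasLebesgueValueAt, ENNReal.tendsto_nhds_zero]
  intro ε hε
  obtain ⟨N, hN⟩ := eventually_atTop.1 (doubled ε hε)
  filter_upwards [Ioo_mem_nhdsGT (show 0 < r / 2 ^ N by positivity)] with ρ ⟨hρ, hρN⟩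
  obtain ⟨j, hj, hj'⟩ := exists_nat_pow_near (x := r / 2 ^ N / ρ)
    ((one_le_div hρ).2 hρN.le) one_lt_two
  rw [le_div_iff₀ hρ] at hj
  rw [div_lt_iff₀ hρ] at hj'
  have le_dyadic : ρ ≤ r / 2 ^ (N + j) := by
    rw [pow_add, ← div_div, le_div_iff₀ (by positivity), mul_comm]
    exact hj
  have dyadic_le : r / 2 ^ (N + j) ≤ 2 * ρ := by
    rw [pow_add, ← div_div, div_le_iff₀ (by positivity)]
    exact hj'.le.trans_eq (by ring)
  exact (meanDev_le_of_ball_subset (ball_subset_ball le_dyadic) dyadic_le).trans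
    (hN _ (Nat.le_add_right N j))

theorem exists_forall_dyadic_meanDev_le [CompleteSpace G] (hu : AEStronglyMeasurable u μ) (x : E)
    (hr : 0 < r) (hosc : ∑' j : ℕ, meanOsc μ u x (r / 2 ^ j) ≠ ∞) :
    ∃ t, ∀ j : ℕ, meanDev μ u x (r / 2 ^ j) t ≤
      (1 + 2 ^ finrank ℝ E) * ∑' m : ℕ, meanOsc μ u x (r / 2 ^ (m + j)) := by
  set D : ℕ → ℝ≥0∞ := fun j => meanOsc μ u x (r / 2 ^ j)
  have radius_pos (j : ℕ) : 0 < r / 2 ^ j := by positivity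
  choose a ha using fun j => exists_meanDev_le_meanOsc hu x (radius_pos j)
  have step (j : ℕ) : edist (a j) (a (j + 1)) ≤ 2 ^ finrank ℝ E * D j + D (j + 1) := by
    have halve : 2 * (r / 2 ^ (j + 1)) = r / 2 ^ j := by field_simp; ring
    rw [edist_eq_enorm_sub]
    refine (enorm_sub_le_two_pow_mul_meanDev_add (x := x) hu (radius_pos (j + 1))).trans ?_
    rw [halve]
    gcongr <;> exact ha _
  have step_tail (j : ℕ) : ∑' m, (2 ^ finrank ℝ E * D (j + m) + D (j + m + 1)) + D j =
      (1 + 2 ^ finrank ℝ E) * ∑' m, D (m + j) := by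
    have head := tsum_eq_zero_add' (f := fun m => D (j + m)) ENNReal.summable
    rw [ENNReal.tsum_add, ENNReal.tsum_mul_left, add_mul, one_mul]
    simp_rw [add_comm _ j, head, add_zero, add_assoc]
    ring
  have summable_steps : ∑' j, (2 ^ finrank ℝ E * D j + D (j + 1)) ≠ ∞ := by
    have total := step_tail 0
    simp only [zero_add, add_zero] at total
    exact ne_top_of_le_ne_top (ENNReal.mul_ne_top (by finiteness) hosc) (le_self_add.trans_eq total)
  obtain ⟨t, ht⟩ := cauchySeq_tendsto_of_complete
    (cauchySeq_of_edist_le_of_tsum_ne_top _ step summable_steps)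
  refine ⟨t, fun j => ?_⟩
  calc meanDev μ u x (r / 2 ^ j) t ≤ meanDev μ u x (r / 2 ^ j) (a j) + ‖a j - t‖ₑ :=
        meanDev_le_meanDev_add_enorm_sub (radius_pos j)
    _ ≤ D j + ∑' m, (2 ^ finrank ℝ E * D (j + m) + D (j + m + 1)) := by
        rw [← edist_eq_enorm_sub]
        exact add_le_add (ha j) (edist_le_tsum_of_edist_le_of_tendsto _ step ht j)
    _ = (1 + 2 ^ finrank ℝ E) * ∑' m, D (m + j) := by rw [add_comm, step_tail]

theorem exists_hasLebesgueValueAt [CompleteSpace G] (hu : AEStronglyMeasurable u μ) (hr : 0 < r)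
    (hosc : ∑' j : ℕ, meanOsc μ u x (r / 2 ^ j) ≠ ∞) :
    ∃ t, HasLebesgueValueAt μ u x t ∧
      meanDev μ u x r t ≤ (1 + 2 ^ finrank ℝ E) * ∑' j : ℕ, meanOsc μ u x (r / 2 ^ j) := by
  obtain ⟨t, ht⟩ := exists_forall_dyadic_meanDev_le hu x hr hosc
  refine ⟨t, hasLebesgueValueAt_of_dyadic hr ?_, by simpa using ht 0⟩
  refine tendsto_of_tendsto_of_tendsto_of_le_of_le tendsto_const_nhds ?_ (fun _ => zero_le) ht
  simpa using ENNReal.Tendsto.const_mul (a := 1 + 2 ^ finrank ℝ E)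
    (ENNReal.tendsto_sum_nat_add _ hosc) (Or.inr (by finiteness))

theorem meanDev_le_of_hasLebesgueValueAt [CompleteSpace G] (hu : AEStronglyMeasurable u μ)
    (hr : 0 < r) (ht : HasLebesgueValueAt μ u x t) :
    meanDev μ u x r t ≤ (1 + 2 ^ finrank ℝ E) * ∑' j : ℕ, meanOsc μ u x (r / 2 ^ j) := by
  by_cases hosc : ∑' j : ℕ, meanOsc μ u x (r / 2 ^ j) = ∞
  · simp [hosc]
  · obtain ⟨s, hs, hle⟩ := exists_hasLebesgueValueAt hu hr hosc
    exact eq_of_hasLebesgueValueAt hu ht hs ▸ hle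

theorem enorm_sub_le_tsum_meanOsc [CompleteSpace G] (hu : AEStronglyMeasurable u μ) (hxy : x ≠ y)
    (ht : HasLebesgueValueAt μ u x t) (hs : HasLebesgueValueAt μ u y s) :
    ‖t - s‖ₑ ≤ 2 ^ finrank ℝ E * (1 + 2 ^ finrank ℝ E) *
      (∑' j : ℕ, meanOsc μ u x (2 * dist x y / 2 ^ j) +
        ∑' j : ℕ, meanOsc μ u y (2 * dist x y / 2 ^ j)) := by
  have hdist : 0 < dist x y := dist_pos.2 hxy
  calc ‖t - s‖ₑ ≤ meanDev μ u x (dist x y) t + meanDev μ u x (dist x y) s :=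
        enorm_sub_le_meanDev_add_meanDev hu hdist
    _ ≤ 2 ^ finrank ℝ E * meanDev μ u x (2 * dist x y) t +
          2 ^ finrank ℝ E * meanDev μ u y (2 * dist x y) s :=
        add_le_add
          (meanDev_le_of_ball_subset (ball_subset_ball (by linarith)) le_rfl)
          (meanDev_le_of_ball_subset (ball_subset_ball' (by linarith)) le_rfl)
    _ ≤ 2 ^ finrank ℝ E *
            ((1 + 2 ^ finrank ℝ E) * ∑' j : ℕ, meanOsc μ u x (2 * dist x y / 2 ^ j)) +
          2 ^ finrank ℝ E *
            ((1 + 2 ^ finrank ℝ E) * ∑' j : ℕ, meanOsc μ u y (2 * dist x y / 2 ^ j)) := by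
        gcongr <;> exact meanDev_le_of_hasLebesgueValueAt hu (by positivity) ‹_›
    _ = _ := by ring

end MeanOscillation

section Poincare

open Module (finrank)

variable {E G : Type*} [NormedAddCommGroup E] [MeasurableSpace E] [NormedAddCommGroup G]

/-- `F` controls the `L¹` modulus of continuity of `u` on balls. When `F = ‖∇u‖ₑ` this is the only
way in which the gradient enters the Poincaré inequality. -/
def HasTranslationBound (μ : Measure E) (u : E → G) (F : E → ℝ≥0∞) : Prop :=
  ∀ (h x : E) (r R : ℝ), r + ‖h‖ < R →
    ∫⁻ y in ball x r, ‖u (y + h) - u y‖ₑ ∂μ ≤ ‖h‖ₑ * ∫⁻ y in ball x R, F y ∂μ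

variable {μ : Measure E} {u : E → G} {F : E → ℝ≥0∞} {x y : E} {r : ℝ}

theorem setLIntegral_ball_le_setLIntegral_ball_zero [BorelSpace E] [μ.IsAddLeftInvariant]
    (f : E → ℝ≥0∞) (hy : y ∈ ball x r) :
    ∫⁻ z in ball x r, f z ∂μ ≤ ∫⁻ h in ball 0 (2 * r), f (y + h) ∂μ := by
  have mem_ball_zero {h : E} (hh : y + h ∈ ball x r) : h ∈ ball 0 (2 * r) := by
    rw [mem_ball_zero_iff, ← dist_self_add_right h y]
    exact (dist_triangle_right y (y + h) x).trans_lt (by linarith [mem_ball.1 hy, mem_ball.1 hh])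
  rw [← lintegral_indicator measurableSet_ball, ← lintegral_indicator measurableSet_ball,
    ← lintegral_add_left_eq_self _ y]
  refine lintegral_mono fun h => ?_
  by_cases hh : y + h ∈ ball x r
  · simp [indicator_of_mem hh, indicator_of_mem (mem_ball_zero hh)]
  · simp [indicator_of_notMem hh]

variable [NormedSpace ℝ E]

/-- The constant of the `L²` Poincaré inequality `HasTranslationBound.meanOsc_sq_le`. -/
def poincareConst (μ : Measure E) : ℝ≥0∞ :=
  4 * 36 ^ finrank ℝ E / μ (ball 0 1)

theorem poincareConst_ne_top (μ : Measure E) [μ.IsOpenPosMeasure] : poincareConst μ ≠ ∞ :=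
  ENNReal.div_ne_top (by finiteness) (measure_ball_pos μ 0 one_pos).ne'

variable [FiniteDimensional ℝ E] [BorelSpace E] [μ.IsAddHaarMeasure]

theorem aemeasurable_enorm_translate_sub (hu : AEStronglyMeasurable u μ) :
    AEMeasurable (fun p : E × E => ‖u (p.1 + p.2) - u p.1‖ₑ) (μ.prod μ) :=
  ((hu.comp_quasiMeasurePreserving (quasiMeasurePreserving_add μ μ)).sub hu.comp_fst).enorm

theorem HasTranslationBound.lintegral_lintegral_enorm_sub_le (hF : HasTranslationBound μ u F)
    (hu : AEStronglyMeasurable u μ) :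
    ∫⁻ y in ball x r, ∫⁻ z in ball x r, ‖u z - u y‖ₑ ∂μ ∂μ ≤
      ENNReal.ofReal (2 * r) * (∫⁻ y in ball x (3 * r), F y ∂μ) * μ (ball 0 (2 * r)) :=
  calc ∫⁻ y in ball x r, ∫⁻ z in ball x r, ‖u z - u y‖ₑ ∂μ ∂μ
      ≤ ∫⁻ y in ball x r, ∫⁻ h in ball 0 (2 * r), ‖u (y + h) - u y‖ₑ ∂μ ∂μ :=
        setLIntegral_mono' measurableSet_ball fun y hy =>
          setLIntegral_ball_le_setLIntegral_ball_zero (fun z => ‖u z - u y‖ₑ) hy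
    _ = ∫⁻ h in ball 0 (2 * r), ∫⁻ y in ball x r, ‖u (y + h) - u y‖ₑ ∂μ ∂μ := by
        refine lintegral_lintegral_swap ?_
        rw [Measure.prod_restrict]
        exact (aemeasurable_enorm_translate_sub hu).restrict
    _ ≤ ∫⁻ _ in ball 0 (2 * r), ENNReal.ofReal (2 * r) * (∫⁻ y in ball x (3 * r), F y ∂μ) ∂μ := by
        refine setLIntegral_mono' measurableSet_ball fun h hh => ?_
        rw [mem_ball_zero_iff] at hh
        refine (hF h x r (3 * r) (by linarith)).trans ?_
        rw [← ofReal_norm]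
        gcongr
    _ = _ := setLIntegral_const _ _

theorem HasTranslationBound.meanOsc_le (hF : HasTranslationBound μ u F)
    (hu : AEStronglyMeasurable u μ) (hr : 0 < r) :
    meanOsc μ u x r ≤
      2 ^ finrank ℝ E * ENNReal.ofReal (2 * r) * (∫⁻ y in ball x (3 * r), F y ∂μ) /
        μ (ball x r) := by
  have inv_ne_top : (μ (ball x r))⁻¹ ≠ ∞ := ENNReal.inv_ne_top.2 (measure_ball_pos μ x hr).ne'
  simp_rw [meanOsc, meanDev, setLAverage_eq]
  refine ENNReal.div_le_div_right ?_ _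
  simp_rw [div_eq_mul_inv]
  rw [lintegral_mul_const' _ _ inv_ne_top, ← div_eq_mul_inv]
  refine ENNReal.div_le_of_le_mul ((hF.lintegral_lintegral_enorm_sub_le hu).trans ?_)
  calc ENNReal.ofReal (2 * r) * (∫⁻ y in ball x (3 * r), F y ∂μ) * μ (ball 0 (2 * r))
      ≤ ENNReal.ofReal (2 * r) * (∫⁻ y in ball x (3 * r), F y ∂μ) *
          (2 ^ finrank ℝ E * μ (ball x r)) := by
        gcongr
        exact measure_ball_le_two_pow_mul μ 0 x le_rfl
    _ = _ := by ring

theorem measure_ball_three_mul_div_sq (μ : Measure E) [μ.IsAddHaarMeasure] (x : E) (hr : 0 < r) :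
    μ (ball x (3 * r)) / μ (ball x r) ^ 2 = 9 ^ finrank ℝ E / μ (ball x (3 * r)) := by
  have ball_ne_zero (ρ : ℝ) (hρ : 0 < ρ) : μ (ball x ρ) ≠ 0 := (measure_ball_pos μ x hρ).ne'
  have triple : μ (ball x (3 * r)) = 3 ^ finrank ℝ E * μ (ball x r) := by
    rw [Measure.addHaar_ball_mul_of_pos μ x three_pos, Measure.addHaar_ball_center,
      ← Measure.addHaar_ball_center μ x, ENNReal.ofReal_pow (by positivity), ENNReal.ofReal_ofNat]
  rw [ENNReal.div_eq_div_iff (ball_ne_zero _ (by positivity)) measure_ball_lt_top.ne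
    (pow_ne_zero 2 (ball_ne_zero r hr)) (ENNReal.pow_ne_top measure_ball_lt_top.ne), triple,
    show (9 : ℝ≥0∞) = 3 * 3 by norm_num, mul_pow]
  ring

theorem HasTranslationBound.meanOsc_sq_le (hF : HasTranslationBound μ u F)
    (hu : AEStronglyMeasurable u μ) (hFm : AEMeasurable F μ) (hr : 0 < r) :
    meanOsc μ u x r ^ 2 ≤
      poincareConst μ * scaledEnergy μ (finrank ℝ E - 1) (fun z => F z ^ 2) x (3 * r) := by
  set N := finrank ℝ E with hN
  set R := 3 * r with hR
  have hR0 : 0 < R := by positivity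
  have scale : ENNReal.ofReal R ^ (1 - ((N : ℝ) - 1)) =
      ENNReal.ofReal R ^ 2 * (ENNReal.ofReal R ^ N)⁻¹ := by
    rw [show 1 - ((N : ℝ) - 1) = (2 : ℕ) - N by push_cast; ring,
      ENNReal.rpow_sub _ _ (ENNReal.ofReal_pos.2 hR0).ne' ENNReal.ofReal_ne_top,
      ENNReal.rpow_natCast, ENNReal.rpow_natCast, div_eq_mul_inv]
  have inv_measure_ball :
      (μ (ball x R))⁻¹ = (ENNReal.ofReal R ^ N)⁻¹ * (μ (ball 0 1))⁻¹ := by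
    rw [Measure.addHaar_ball_of_pos μ x hR0, ENNReal.ofReal_pow hR0.le,
      ENNReal.mul_inv (Or.inr measure_ball_lt_top.ne) (Or.inl (by finiteness))]
  calc meanOsc μ u x r ^ 2
      ≤ (2 ^ N * ENNReal.ofReal (2 * R) * (∫⁻ y in ball x R, F y ∂μ) / μ (ball x r)) ^ 2 := by
        grw [hF.meanOsc_le hu hr, show 2 * r ≤ 2 * R by linarith]
    _ = (2 ^ N * ENNReal.ofReal (2 * R)) ^ 2 * (∫⁻ y in ball x R, F y ∂μ) ^ 2 /
          μ (ball x r) ^ 2 := by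
        rw [div_eq_mul_inv, mul_pow, mul_pow _ (lintegral _ _), ← ENNReal.inv_pow, div_eq_mul_inv]
    _ ≤ (2 ^ N * ENNReal.ofReal (2 * R)) ^ 2 *
          (μ (ball x R) * ∫⁻ y in ball x R, F y ^ 2 ∂μ) / μ (ball x r) ^ 2 := by
        grw [setLIntegral_sq_le hFm]
    _ = (2 ^ N * ENNReal.ofReal (2 * R)) ^ 2 * (∫⁻ y in ball x R, F y ^ 2 ∂μ) *
          (9 ^ N / μ (ball x R)) := by
        rw [hR, ← measure_ball_three_mul_div_sq μ x hr, div_eq_mul_inv, div_eq_mul_inv]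
        ring
    _ = poincareConst μ * scaledEnergy μ (N - 1) (fun z => F z ^ 2) x R := by
        rw [poincareConst, ← hN, scaledEnergy, scale, div_eq_mul_inv, div_eq_mul_inv,
          inv_measure_ball, ENNReal.ofReal_mul zero_le_two, ENNReal.ofReal_ofNat,
          show (36 : ℝ≥0∞) ^ N = 2 ^ N * 2 ^ N * 9 ^ N by rw [← mul_pow, ← mul_pow]; norm_num]
        ring

theorem HasTranslationBound.tsum_meanOsc_sq_le (hF : HasTranslationBound μ u F)
    (hu : AEStronglyMeasurable u μ) (hFm : AEMeasurable F μ) (hxy : x ≠ y) :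
    (∑' j : ℕ, meanOsc μ u x (2 * dist x y / 2 ^ j)) ^ 2 ≤
      3 * poincareConst μ * dyadicEnergy μ (finrank ℝ E - 1) (fun z => F z ^ 2) x y := by
  have hdist : 0 < dist x y := dist_pos.2 hxy
  have radius_eq (j : ℕ) : 3 * (2 * dist x y / 2 ^ j) = 6 / 2 ^ j * dist x y := by ring
  calc (∑' j : ℕ, meanOsc μ u x (2 * dist x y / 2 ^ j)) ^ 2
      ≤ ENNReal.ofReal (1 - (3 / 2)⁻¹)⁻¹ *
          ∑' j : ℕ, ENNReal.ofReal ((3 / 2) ^ j) * meanOsc μ u x (2 * dist x y / 2 ^ j) ^ 2 :=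
        tsum_sq_le_of_geometric (by norm_num) _
    _ ≤ 3 * ∑' j : ℕ, ENNReal.ofReal ((3 / 2) ^ j) * (poincareConst μ *
          scaledEnergy μ (finrank ℝ E - 1) (fun z => F z ^ 2) x (6 / 2 ^ j * dist x y)) := by
        gcongr with j
        · norm_num
        · rw [← radius_eq]
          exact hF.meanOsc_sq_le hu hFm (by positivity)
    _ = 3 * poincareConst μ * dyadicEnergy μ (finrank ℝ E - 1) (fun z => F z ^ 2) x y := by
        simp_rw [mul_left_comm _ (poincareConst μ), ENNReal.tsum_mul_left, dyadicEnergy, mul_assoc]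

end Poincare

section LinesMissingSmallSets

open Module (finrank)

theorem ae_notMem_image_of_hausdorffMeasure_eq_zero {E F : Type*} [NormedAddCommGroup E]
    [NormedSpace ℝ E] [FiniteDimensional ℝ E] [MeasurableSpace E] [BorelSpace E]
    [NormedAddCommGroup F] [NormedSpace ℝ F] [FiniteDimensional ℝ F] (μ : Measure E)
    [μ.IsAddHaarMeasure] [MeasurableSpace F] [BorelSpace F] (L : E →L[ℝ] F)
    (hL : Function.Surjective L) {Γ : Set E} (hΓ : μH[finrank ℝ F] Γ = 0) :
    ∀ᵐ y ∂μ, L y ∉ L '' Γ := by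
  have image_null : μH[finrank ℝ F] (L '' Γ) = 0 := by
    refine le_antisymm ?_ zero_le
    simpa [hΓ] using L.lipschitz.hausdorffMeasure_image_le (Nat.cast_nonneg (finrank ℝ F)) Γ
  set S := toMeasurable μH[finrank ℝ F] (L '' Γ)
  have ae_notMem_hull : ∀ᵐ y ∂μ, L y ∈ Sᶜ :=
    (ae_comp_linearMap_mem_iff (L := L.toLinearMap) μ μH[finrank ℝ F] hL
      (measurableSet_toMeasurable _ _).compl).2 <| by
        rw [ae_iff]
        simpa [S] using image_null
  filter_upwards [ae_notMem_hull] with y hy hyΓ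
  exact hy (subset_toMeasurable _ _ hyΓ)

variable {E : Type*} [NormedAddCommGroup E] [InnerProductSpace ℝ E] [FiniteDimensional ℝ E]
  [MeasurableSpace E] [BorelSpace E] {Γ : Set E}

theorem ae_forall_add_smul_notMem (μ : Measure E) [μ.IsAddHaarMeasure]
    (hΓ : μH[(finrank ℝ E : ℝ) - 1] Γ = 0) (h : E) : ∀ᵐ y ∂μ, ∀ t : ℝ, y + t • h ∉ Γ := by
  set K : Submodule ℝ E := (ℝ ∙ h)ᗮ
  have finrank_le : (finrank ℝ E : ℝ) - 1 ≤ finrank ℝ K := by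
    have line_le : finrank ℝ (ℝ ∙ h) ≤ 1 := by
      simpa using finrank_span_le_card (R := ℝ) ({h} : Set E)
    have sum_eq : finrank ℝ (ℝ ∙ h) + finrank ℝ K = finrank ℝ E :=
      Submodule.finrank_add_finrank_orthogonal (ℝ ∙ h)
    rw [sub_le_iff_le_add]
    exact_mod_cast (by lia : finrank ℝ E ≤ finrank ℝ K + 1)
  have null : μH[finrank ℝ K] Γ = 0 :=
    le_antisymm ((Measure.hausdorffMeasure_mono finrank_le Γ).trans_eq hΓ) zero_le
  have surjective : Function.Surjective K.orthogonalProjectionOnto :=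
    fun z => ⟨z, K.orthogonalProjectionOnto_mem_subspace_eq_self z⟩
  have projection_smul (t : ℝ) : K.orthogonalProjectionOnto (t • h) = 0 := by
    rw [Submodule.orthogonalProjectionOnto_eq_zero_iff, Submodule.orthogonal_orthogonal]
    exact Submodule.smul_mem _ t (Submodule.mem_span_singleton_self h)
  filter_upwards [ae_notMem_image_of_hausdorffMeasure_eq_zero μ K.orthogonalProjectionOnto
    surjective null] with y hy t ht
  exact hy ⟨y + t • h, ht, by rw [map_add, projection_smul, add_zero]⟩

theorem measure_eq_zero_of_hausdorffMeasure (μ : Measure E) [μ.IsAddHaarMeasure]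
    (hΓ : μH[(finrank ℝ E : ℝ) - 1] Γ = 0) : μ Γ = 0 := by
  simpa [ae_iff] using ae_forall_add_smul_notMem μ hΓ 0

end LinesMissingSmallSets

section AhlforsRegular

variable {n : ℕ} {d C₀ : ℝ} {Γ : Set (Euc n)}

theorem AhlforsRegular.upperRegular (hΓ : AhlforsRegular n d C₀ Γ) :
    UpperRegular (μH[d].restrict Γ) (Real.toNNReal (C₀ * 2 ^ d)) d := by
  intro z r hr
  rw [Measure.restrict_apply measurableSet_ball]
  rcases (ball z r ∩ Γ).eq_empty_or_nonempty with hempty | ⟨x, hxz, hxΓ⟩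
  · simp [hempty]
  have ball_subset : ball z r ⊆ ball x (2 * r) :=
    ball_subset_ball' (by rw [dist_comm]; linarith [mem_ball.1 hxz])
  calc μH[d] (ball z r ∩ Γ) ≤ μH[d] (Γ ∩ ball x (2 * r)) := by
        rw [inter_comm]
        exact measure_mono (inter_subset_inter_right Γ ball_subset)
    _ ≤ ENNReal.ofReal (C₀ * (2 * r) ^ d) := (hΓ x hxΓ (2 * r) (by positivity)).2
    _ = Real.toNNReal (C₀ * 2 ^ d) * ENNReal.ofReal r ^ d := by
        rw [Real.mul_rpow zero_le_two hr.le, ← mul_assoc, ENNReal.ofReal_mul' (by positivity),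
          ENNReal.ofReal_rpow_of_pos hr, ENNReal.ofReal]

theorem UpperRegular.hausdorffMeasure_eq_zero {X : Type*} [MetricSpace X] [MeasurableSpace X]
    [BorelSpace X] {A : ℝ≥0} {d s : ℝ} {Γ : Set X} (hΓ : UpperRegular (μH[d].restrict Γ) A d)
    (hds : d < s) : μH[s] Γ = 0 := by
  rcases Γ.eq_empty_or_nonempty with rfl | ⟨x, -⟩
  · exact measure_empty
  have null (k : ℕ) : μH[s] (ball x (k + 1) ∩ Γ) = 0 := by
    refine (Measure.hausdorffMeasure_zero_or_top hds _).resolve_right (ne_of_lt ?_)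
    rw [← Measure.restrict_apply measurableSet_ball]
    exact hΓ.measure_ball_lt_top x (by positivity)
  refine measure_mono_null (fun y hy => ?_) (measure_iUnion_null null)
  obtain ⟨k, hk⟩ := exists_nat_gt (dist y x)
  exact mem_iUnion.2 ⟨k, mem_ball.2 (by linarith), hy⟩

end AhlforsRegular

section Mollification

open scoped Convolution

section Normed

theorem setLIntegral_ball_add_right_le {E : Type*} [NormedAddCommGroup E] [MeasurableSpace E]
    [BorelSpace E] (μ : Measure E) [μ.IsAddRightInvariant] {F : E → ℝ≥0∞} {c x : E} {r R : ℝ}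
    (hR : r + ‖c‖ ≤ R) :
    ∫⁻ y in ball x r, F (y + c) ∂μ ≤ ∫⁻ y in ball x R, F y ∂μ := by
  rw [← lintegral_indicator measurableSet_ball, ← lintegral_indicator measurableSet_ball,
    ← lintegral_add_right_eq_self ((ball x R).indicator F) c]
  refine lintegral_mono fun y => ?_
  by_cases hy : y ∈ ball x r
  · have add_mem : y + c ∈ ball x R := by
      refine (dist_triangle (y + c) y x).trans_lt ?_
      rw [dist_self_add_left]
      linarith [mem_ball.1 hy]
    simp [indicator_of_mem hy, indicator_of_mem add_mem]
  · simp [indicator_of_notMem hy]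

variable {E : Type*} [NormedAddCommGroup E] [NormedSpace ℝ E]

theorem enorm_add_sub_le_lintegral_enorm_fderiv {G : Type*} [NormedAddCommGroup G]
    [NormedSpace ℝ G] [CompleteSpace G] {f : E → G} (hf : ContDiff ℝ 1 f) (y h : E) :
    ‖f (y + h) - f y‖ₑ ≤ ∫⁻ t in Ioc (0 : ℝ) 1, ‖fderiv ℝ f (y + t • h) h‖ₑ := by
  have hasDerivAt_line (t : ℝ) :
      HasDerivAt (fun t : ℝ => f (y + t • h)) (fderiv ℝ f (y + t • h) h) t := by
    refine (hf.differentiable one_ne_zero _).hasFDerivAt.comp_hasDerivAt t ?_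
    simpa using ((hasDerivAt_id t).smul_const h).const_add y
  have continuous_deriv : Continuous fun t : ℝ => fderiv ℝ f (y + t • h) h := by
    have := hf.continuous_fderiv one_ne_zero
    fun_prop
  have ftc := intervalIntegral.integral_eq_sub_of_hasDerivAt (a := 0) (b := 1)
    (fun t _ => hasDerivAt_line t) (continuous_deriv.intervalIntegrable _ _)
  simp only [one_smul, zero_smul, add_zero] at ftc
  rw [← ftc, intervalIntegral.integral_of_le zero_le_one]
  exact enorm_integral_le_lintegral_enorm _

variable [FiniteDimensional ℝ E] [MeasurableSpace E] (μ : Measure E)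

theorem contDiff_normed_const_sub {φ : ContDiffBump (0 : E)} (w : E) :
    ContDiff ℝ (⊤ : ℕ∞) fun y => φ.normed μ (w - y) :=
  φ.contDiff_normed.comp (contDiff_const.sub contDiff_id)

variable [BorelSpace E] [μ.IsAddHaarMeasure] (φ : ContDiffBump (0 : E))

theorem lintegral_ofReal_normed : ∫⁻ s, ENNReal.ofReal (φ.normed μ s) ∂μ = 1 := by
  rw [← ofReal_integral_eq_lintegral_ofReal φ.integrable_normed
    (Eventually.of_forall φ.nonneg_normed), φ.integral_normed, ENNReal.ofReal_one]

theorem setLIntegral_lintegral_normed_mul_le {F : E → ℝ≥0∞} (hF : Measurable F) {c x : E}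
    {r R : ℝ} (hR : r + ‖c‖ + φ.rOut ≤ R) :
    ∫⁻ y in ball x r, ∫⁻ z, ENNReal.ofReal (φ.normed μ (y + c - z)) * F z ∂μ ∂μ ≤
      ∫⁻ y in ball x R, F y ∂μ := by
  have measurable_normed : Measurable (φ.normed μ) :=
    (φ.contDiff_normed (n := 0)).continuous.measurable
  have shift (y : E) : ∫⁻ z, ENNReal.ofReal (φ.normed μ (y + c - z)) * F z ∂μ =
      ∫⁻ s, ENNReal.ofReal (φ.normed μ s) * F (y + (c - s)) ∂μ := by
    rw [← lintegral_sub_left_eq_self _ (y + c)]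
    simp_rw [sub_sub_cancel, add_sub_assoc]
  simp_rw [shift]
  rw [lintegral_lintegral_swap (by fun_prop)]
  calc ∫⁻ s, ∫⁻ y in ball x r, ENNReal.ofReal (φ.normed μ s) * F (y + (c - s)) ∂μ ∂μ
      ≤ ∫⁻ s, ENNReal.ofReal (φ.normed μ s) * ∫⁻ y in ball x R, F y ∂μ ∂μ := by
        refine lintegral_mono fun s => ?_
        rw [lintegral_const_mul _ (by fun_prop)]
        by_cases hs : φ.normed μ s = 0
        · simp [hs]
        have norm_lt : ‖s‖ < φ.rOut := by
          rw [← mem_ball_zero_iff, ← φ.support_normed_eq (μ := μ)]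
          exact hs
        refine mul_le_mul_right (setLIntegral_ball_add_right_le μ ?_) _
        linarith [norm_sub_le c s]
    _ = ∫⁻ y in ball x R, F y ∂μ := by
        rw [lintegral_mul_const _ (by fun_prop), lintegral_ofReal_normed, one_mul]

/-- The mollification `ρ ⋆ u`, where `ρ` is the bump function `φ` normalized to have integral
`1`. -/
def mollify (u : E → ℝ) : E → ℝ :=
  φ.normed μ ⋆[ContinuousLinearMap.lsmul ℝ ℝ, μ] u

variable {u : E → ℝ}

theorem contDiff_mollify (hu : LocallyIntegrable u μ) : ContDiff ℝ 1 (mollify μ φ u) :=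
  φ.hasCompactSupport_normed.contDiff_convolution_left _ φ.contDiff_normed hu

variable {μ} in
theorem exists_ae_tendsto_mollify (hu : LocallyIntegrable u μ) {η : ℝ} (hη : 0 < η) :
    ∃ φ : ℕ → ContDiffBump (0 : E), (∀ k, (φ k).rOut ≤ η) ∧
      Tendsto (fun k => (φ k).rOut) atTop (𝓝 0) ∧
      ∀ᵐ y ∂μ, Tendsto (fun k => mollify μ (φ k) u y) atTop (𝓝 (u y)) := by
  have tendsto_rOut : Tendsto (fun k : ℕ => η / (k + 1)) atTop (𝓝 0) := by
    simpa [div_eq_mul_inv] using (tendsto_one_div_add_atTop_nhds_zero_nat (𝕜 := ℝ)).const_mul η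
  refine ⟨fun k => ⟨η / (k + 1) / 2, η / (k + 1), by positivity, half_lt_self (by positivity)⟩,
    fun k => div_le_self hη.le (by simp), tendsto_rOut, ?_⟩
  refine ContDiffBump.ae_convolution_tendsto_right_of_locallyIntegrable (K := 2) tendsto_rOut
    (Eventually.of_forall fun k => ?_) hu
  exact (mul_div_cancel₀ _ two_ne_zero).ge

variable {φ} (w : E)

theorem tsupport_normed_const_sub_subset :
    tsupport (fun y => φ.normed μ (w - y)) ⊆ closedBall w φ.rOut := by
  refine closure_minimal (fun y hy => ?_) isClosed_closedBall
  have hwy : w - y ∈ tsupport (φ.normed μ) := subset_tsupport _ hy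
  rwa [φ.tsupport_normed_eq, mem_closedBall_zero_iff, ← dist_eq_norm, dist_comm] at hwy

theorem hasCompactSupport_normed_const_sub :
    HasCompactSupport fun y => φ.normed μ (w - y) :=
  (isCompact_closedBall w φ.rOut).of_isClosed_subset (isClosed_tsupport _)
    (tsupport_normed_const_sub_subset μ w)

theorem fderiv_mollify (hu : LocallyIntegrable u μ) :
    fderiv ℝ (mollify μ φ u) w =
      -∫ y, u y • fderiv ℝ (fun y => φ.normed μ (w - y)) y ∂μ := by
  have fderiv_normed_const_sub (y : E) :
      fderiv ℝ (fun y => φ.normed μ (w - y)) y = -fderiv ℝ (φ.normed μ) (w - y) :=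
    (((φ.contDiff_normed (n := 1)).differentiable one_ne_zero _).hasFDerivAt.comp y
      ((hasFDerivAt_id y).const_sub w)).fderiv.trans (by ext; simp)
  rw [mollify, (φ.hasCompactSupport_normed.hasFDerivAt_convolution_left
    (ContinuousLinearMap.lsmul ℝ ℝ) φ.contDiff_normed hu w).fderiv, convolution_eq_swap,
    ← integral_neg]
  congr 1 with y h
  simp [fderiv_normed_const_sub, ContinuousLinearMap.precompL_apply, mul_comm]

end Normed

theorem fderiv_mollify_apply {E : Type*} [NormedAddCommGroup E] [InnerProductSpace ℝ E]
    [FiniteDimensional ℝ E] [MeasurableSpace E] [BorelSpace E] (μ : Measure E)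
    [μ.IsAddHaarMeasure] {φ : ContDiffBump (0 : E)} {u : E → ℝ} (hu : LocallyIntegrable u μ)
    (w h : E) :
    fderiv ℝ (mollify μ φ u) w h =
      -inner ℝ h (∫ y, u y • gradient (fun y => φ.normed μ (w - y)) y ∂μ) := by
  have continuous_fderiv : Continuous (fderiv ℝ fun y => φ.normed μ (w - y)) :=
    (contDiff_normed_const_sub μ w).continuous_fderiv (by simp)
  have support_fderiv : HasCompactSupport (fderiv ℝ fun y => φ.normed μ (w - y)) :=
    (hasCompactSupport_normed_const_sub μ w).fderiv ℝ
  have integrable_fderiv :=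
    hu.integrable_smul_right_of_hasCompactSupport continuous_fderiv support_fderiv
  have integrable_gradient :=
    hu.integrable_smul_right_of_hasCompactSupport
      ((LinearIsometryEquiv.continuous (InnerProductSpace.toDual ℝ E).symm).comp continuous_fderiv)
      (support_fderiv.comp_left (map_zero (InnerProductSpace.toDual ℝ E).symm))
  rw [fderiv_mollify μ w hu, neg_apply,
    ContinuousLinearMap.integral_apply integrable_fderiv]
  refine congrArg Neg.neg (Eq.trans ?_ (integral_inner integrable_gradient h))
  congr 1 with y
  rw [inner_smul_right, real_inner_comm]
  exact congrArg (u y * ·) (inner_gradient_left).symm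

variable {n : ℕ} {u : Euc n → ℝ} {v : Euc n → Euc n} {U : Set (Euc n)}

theorem IsDistribGradOn.fderiv_mollify_apply (huv : IsDistribGradOn u v U)
    (hu : LocallyIntegrable u volume) {φ : ContDiffBump (0 : Euc n)} {w : Euc n}
    (hw : closedBall w φ.rOut ⊆ U) (h : Euc n) :
    fderiv ℝ (mollify volume φ u) w h =
      inner ℝ h (∫ y in U, φ.normed volume (w - y) • v y) := by
  have tsupport_subset : tsupport (fun y => φ.normed volume (w - y)) ⊆ U :=
    (tsupport_normed_const_sub_subset volume w).trans hw
  have gradient_eq_zero (y : Euc n) (hy : y ∉ U) :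
      u y • gradient (fun y => φ.normed volume (w - y)) y = 0 := by
    have fderiv_eq_zero : fderiv ℝ (fun y => φ.normed volume (w - y)) y = 0 :=
      Function.notMem_support.1 fun hmem => hy (tsupport_subset (support_fderiv_subset ℝ hmem))
    simp [gradient, fderiv_eq_zero]
  rw [_root_.fderiv_mollify_apply volume hu,
    ← setIntegral_eq_integral_of_forall_compl_eq_zero gradient_eq_zero,
    huv _ (contDiff_normed_const_sub volume w) (hasCompactSupport_normed_const_sub volume w)
      tsupport_subset, inner_neg_right, neg_neg]

theorem IsDistribGradOn.enorm_fderiv_mollify_apply_le (huv : IsDistribGradOn u v U)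
    (hu : LocallyIntegrable u volume) {φ : ContDiffBump (0 : Euc n)} {w : Euc n}
    (hw : closedBall w φ.rOut ⊆ U) (h : Euc n) :
    ‖fderiv ℝ (mollify volume φ u) w h‖ₑ ≤
      ‖h‖ₑ * ∫⁻ y in U, ENNReal.ofReal (φ.normed volume (w - y)) * ‖v y‖ₑ := by
  rw [huv.fderiv_mollify_apply hu hw]
  calc ‖inner ℝ h (∫ y in U, φ.normed volume (w - y) • v y)‖ₑ
      ≤ ‖h‖ₑ * ‖∫ y in U, φ.normed volume (w - y) • v y‖ₑ := by
        simp_rw [← ofReal_norm, ← ENNReal.ofReal_mul (norm_nonneg h)]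
        exact ENNReal.ofReal_le_ofReal (norm_inner_le_norm _ _)
    _ ≤ ‖h‖ₑ * ∫⁻ y in U, ‖φ.normed volume (w - y) • v y‖ₑ := by
        gcongr
        exact enorm_integral_le_lintegral_enorm _
    _ = ‖h‖ₑ * ∫⁻ y in U, ENNReal.ofReal (φ.normed volume (w - y)) * ‖v y‖ₑ := by
        simp_rw [enorm_smul, Real.enorm_eq_ofReal (φ.nonneg_normed _)]

end Mollification

section TranslationBound

open Module (finrank)

/-- The starting points `y` of the segments `[y, y + h]` that stay at distance at least `ε`
from `Γ`. -/
def farSegments {E : Type*} [NormedAddCommGroup E] [NormedSpace ℝ E] (Γ : Set E) (h : E) (ε : ℝ) :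
    Set E :=
  {y | ∀ t ∈ Icc (0 : ℝ) 1, ε ≤ infDist (y + t • h) Γ}

theorem isClosed_farSegments {E : Type*} [NormedAddCommGroup E] [NormedSpace ℝ E] (Γ : Set E)
    (h : E) (ε : ℝ) : IsClosed (farSegments Γ h ε) := by
  simp only [farSegments, ofPred_forall]
  refine isClosed_biInter fun t _ => isClosed_le continuous_const ?_
  exact (continuous_infDist_pt Γ).comp (continuous_id.add continuous_const)

theorem ae_eventually_mem_farSegments {E : Type*} [NormedAddCommGroup E] [InnerProductSpace ℝ E]
    [FiniteDimensional ℝ E] [MeasurableSpace E] [BorelSpace E] (μ : Measure E)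
    [μ.IsAddHaarMeasure] {Γ : Set E} (hcl : IsClosed Γ) (hne : Γ.Nonempty)
    (hΓ : μH[(finrank ℝ E : ℝ) - 1] Γ = 0) {ι : Type*} {l : Filter ι} {ε : ι → ℝ}
    (hε : Tendsto ε l (𝓝 0)) (h : E) :
    ∀ᵐ y ∂μ, ∀ᶠ k in l, y ∈ farSegments Γ h (ε k) := by
  filter_upwards [ae_forall_add_smul_notMem μ hΓ h] with y hy
  have continuous_infDist : Continuous fun t : ℝ => infDist (y + t • h) Γ :=
    (continuous_infDist_pt Γ).comp (by fun_prop)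
  obtain ⟨t₀, -, isMinOn⟩ := isCompact_Icc.exists_isMinOn (nonempty_Icc.2 (zero_le_one (α := ℝ)))
    continuous_infDist.continuousOn
  have infDist_pos : 0 < infDist (y + t₀ • h) Γ := (hcl.notMem_iff_infDist_pos hne).1 (hy t₀)
  filter_upwards [hε.eventually_lt_const infDist_pos] with k hk t ht
  exact hk.le.trans (isMinOn ht)

variable {n : ℕ} {u : Euc n → ℝ} {v : Euc n → Euc n} {Γ : Set (Euc n)} {F : Euc n → ℝ≥0∞}
  {φ : ContDiffBump (0 : Euc n)} {ε r R : ℝ} {x y h : Euc n}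

theorem IsDistribGradOn.enorm_mollify_add_sub_le (huv : IsDistribGradOn u v Γᶜ)
    (hu : LocallyIntegrable u volume) (hvF : ∀ᵐ z ∂volume.restrict Γᶜ, ‖v z‖ₑ = F z)
    (hφ : φ.rOut < ε) (hy : y ∈ farSegments Γ h ε) :
    ‖mollify volume φ u (y + h) - mollify volume φ u y‖ₑ ≤ ‖h‖ₑ * ∫⁻ t in Ioc (0 : ℝ) 1,
      ∫⁻ z, ENNReal.ofReal (φ.normed volume (y + t • h - z)) * F z := by
  refine (enorm_add_sub_le_lintegral_enorm_fderiv (contDiff_mollify volume φ hu) y h).trans ?_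
  rw [← lintegral_const_mul' _ _ enorm_ne_top]
  refine setLIntegral_mono' measurableSet_Ioc fun t ht => ?_
  have closedBall_subset : closedBall (y + t • h) φ.rOut ⊆ Γᶜ := fun z hz hzΓ => by
    rw [mem_closedBall'] at hz
    linarith [hy t (Ioc_subset_Icc_self ht), infDist_le_dist_of_mem (x := y + t • h) hzΓ]
  refine (huv.enorm_fderiv_mollify_apply_le hu closedBall_subset h).trans ?_
  refine mul_le_mul_right ?_ _
  calc ∫⁻ z in Γᶜ, ENNReal.ofReal (φ.normed volume (y + t • h - z)) * ‖v z‖ₑ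
      = ∫⁻ z in Γᶜ, ENNReal.ofReal (φ.normed volume (y + t • h - z)) * F z := by
        refine lintegral_congr_ae (hvF.mono fun z hz => ?_)
        simp only [hz]
    _ ≤ ∫⁻ z, ENNReal.ofReal (φ.normed volume (y + t • h - z)) * F z :=
        setLIntegral_le_lintegral _ _

theorem setLIntegral_lintegral_segment_normed_mul_le (hF : Measurable F)
    (hR : r + ‖h‖ + φ.rOut ≤ R) :
    ∫⁻ y in ball x r, ∫⁻ t in Ioc (0 : ℝ) 1,
        ∫⁻ z, ENNReal.ofReal (φ.normed volume (y + t • h - z)) * F z ≤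
      ∫⁻ y in ball x R, F y := by
  have measurable_normed : Measurable (φ.normed volume) :=
    (φ.contDiff_normed (n := 0)).continuous.measurable
  have measurable_integrand : Measurable fun p : (Euc n × ℝ) × Euc n =>
      ENNReal.ofReal (φ.normed volume (p.1.1 + p.1.2 • h - p.2)) * F p.2 := by fun_prop
  rw [lintegral_lintegral_swap measurable_integrand.lintegral_prod_right'.aemeasurable]
  calc ∫⁻ t in Ioc (0 : ℝ) 1, ∫⁻ y in ball x r,
        ∫⁻ z, ENNReal.ofReal (φ.normed volume (y + t • h - z)) * F z
      ≤ ∫⁻ _ in Ioc (0 : ℝ) 1, ∫⁻ y in ball x R, F y := by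
        refine setLIntegral_mono' measurableSet_Ioc fun t ht => ?_
        refine setLIntegral_lintegral_normed_mul_le volume φ hF ?_
        rw [norm_smul, Real.norm_of_nonneg ht.1.le]
        linarith [mul_le_of_le_one_left (norm_nonneg h) ht.2]
    _ = ∫⁻ y in ball x R, F y := by simp

theorem IsDistribGradOn.setLIntegral_indicator_farSegments_le (huv : IsDistribGradOn u v Γᶜ)
    (hu : LocallyIntegrable u volume) (hF : Measurable F)
    (hvF : ∀ᵐ z ∂volume.restrict Γᶜ, ‖v z‖ₑ = F z) (hφ : φ.rOut < ε)
    (hR : r + ‖h‖ + φ.rOut ≤ R) :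
    ∫⁻ y in ball x r, (farSegments Γ h ε).indicator
        (fun y => ‖mollify volume φ u (y + h) - mollify volume φ u y‖ₑ) y ≤
      ‖h‖ₑ * ∫⁻ y in ball x R, F y := by
  grw [← setLIntegral_lintegral_segment_normed_mul_le hF hR,
    ← lintegral_const_mul' _ _ enorm_ne_top]
  exact lintegral_mono fun y => indicator_apply_le'
    (fun hy => huv.enorm_mollify_add_sub_le hu hvF hφ hy) fun _ => zero_le

theorem IsDistribGradOn.hasTranslationBound (huv : IsDistribGradOn u v Γᶜ)
    (hu : LocallyIntegrable u volume) (hF : Measurable F)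
    (hvF : ∀ᵐ z ∂volume.restrict Γᶜ, ‖v z‖ₑ = F z) (hcl : IsClosed Γ) (hne : Γ.Nonempty)
    (hΓ : μH[(finrank ℝ (Euc n) : ℝ) - 1] Γ = 0) : HasTranslationBound volume u F := by
  intro h x r R hR
  obtain ⟨φ, rOut_le, tendsto_rOut, tendsto_mollify⟩ :=
    exists_ae_tendsto_mollify hu (by linarith : 0 < R - r - ‖h‖)
  set V : ℕ → Euc n → ℝ := fun k => mollify volume (φ k) u
  have tendsto_mollify_add : ∀ᵐ y, Tendsto (fun k => V k (y + h)) atTop (𝓝 (u (y + h))) :=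
    (measurePreserving_add_right volume h).quasiMeasurePreserving.ae tendsto_mollify
  set f : ℕ → Euc n → ℝ≥0∞ := fun k =>
    (farSegments Γ h (2 * (φ k).rOut)).indicator fun y => ‖V k (y + h) - V k y‖ₑ
  have measurable_f (k : ℕ) : Measurable (f k) := by
    have := (contDiff_mollify volume (φ k) hu).continuous
    exact (by fun_prop : Continuous _).measurable.indicator (isClosed_farSegments ..).measurableSet
  have tendsto_f : ∀ᵐ y, Tendsto (fun k => f k y) atTop (𝓝 ‖u (y + h) - u y‖ₑ) := by
    filter_upwards [tendsto_mollify, tendsto_mollify_add, ae_eventually_mem_farSegments volume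
      hcl hne hΓ (by simpa using tendsto_rOut.const_mul 2) h] with y hV hV_add hmem
    exact (hV_add.sub hV).enorm.congr' (hmem.mono fun k hk => (indicator_of_mem hk _).symm)
  calc ∫⁻ y in ball x r, ‖u (y + h) - u y‖ₑ
      = ∫⁻ y in ball x r, liminf (fun k => f k y) atTop :=
        lintegral_congr_ae (ae_restrict_of_ae (tendsto_f.mono fun y hy => hy.liminf_eq.symm))
    _ ≤ liminf (fun k => ∫⁻ y in ball x r, f k y) atTop := lintegral_liminf_le measurable_f
    _ ≤ ‖h‖ₑ * ∫⁻ y in ball x R, F y := by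
        refine liminf_le_of_le (h := fun b hb => ?_)
        obtain ⟨k, hk⟩ := hb.exists
        exact hk.trans (huv.setLIntegral_indicator_farSegments_le hu hF hvF
          (by linarith [(φ k).rOut_pos]) (by linarith [rOut_le k]))

end TranslationBound

section Trace

open Module (finrank)

theorem ae_exists_ne_and_ne_top {α : Type*} [MeasurableSpace α] {σ : Measure α} [SFinite σ]
    [NullSingletonClass σ] {w : α × α → ℝ≥0∞} (hw : AEMeasurable w (σ.prod σ))
    (hfin : ∫⁻ p, w p ∂σ.prod σ ≠ ∞) : ∀ᵐ x ∂σ, ∃ y, x ≠ y ∧ w (x, y) ≠ ∞ := by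
  rcases eq_zero_or_neZero σ with rfl | _
  · simp
  filter_upwards [Measure.ae_ae_of_ae_prod (ae_lt_top' hw hfin)] with x hx
  obtain ⟨y, hy, hxy⟩ := (hx.and (σ.ae_ne x)).exists
  exact ⟨y, hxy.symm, hy.ne⟩

theorem lintegral_prod_add_swap {α : Type*} [MeasurableSpace α] {σ : Measure α} [SFinite σ]
    {w : α × α → ℝ≥0∞} (hw : Measurable w) :
    ∫⁻ p, (w p + w p.swap) ∂σ.prod σ = 2 * ∫⁻ p, w p ∂σ.prod σ := by
  rw [lintegral_add_left hw, lintegral_prod_swap, two_mul]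

section HasTranslationBound

variable {E G : Type*} [NormedAddCommGroup E] [NormedSpace ℝ E] [MeasurableSpace E]

/-- The constant in `HasTranslationBound.enorm_sub_sq_le`, which bounds the difference of two
Lebesgue values of `u` by energies of its gradient. -/
def jumpConst (μ : Measure E) : ℝ≥0∞ :=
  6 * (2 ^ finrank ℝ E * (1 + 2 ^ finrank ℝ E)) ^ 2 * poincareConst μ

theorem jumpConst_ne_top (μ : Measure E) [μ.IsOpenPosMeasure] : jumpConst μ ≠ ∞ :=
  ENNReal.mul_ne_top (by finiteness) (poincareConst_ne_top μ)

/-- The constant of the trace inequality `HasTranslationBound.exists_trace`. -/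
def traceConst (μ : Measure E) (A : ℝ≥0) (d : ℝ) : ℝ≥0∞ :=
  2 * jumpConst μ * kernelConst A d (finrank ℝ E - 1)

theorem traceConst_ne_top (μ : Measure E) [μ.IsOpenPosMeasure] (A : ℝ≥0) {d : ℝ} (hd : 0 < d)
    (hdE : d < finrank ℝ E - 1) : traceConst μ A d ≠ ∞ := by
  have := jumpConst_ne_top μ
  have := kernelConst_ne_top A (hd.trans hdE) hdE
  unfold traceConst
  finiteness

variable [FiniteDimensional ℝ E] [BorelSpace E] [NormedAddCommGroup G] [CompleteSpace G]
  {μ σ : Measure E} [μ.IsAddHaarMeasure] {u g : E → G} {F : E → ℝ≥0∞} {x y : E} {s t : G} {d : ℝ}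

theorem HasTranslationBound.enorm_sub_sq_le (hF : HasTranslationBound μ u F)
    (hu : AEStronglyMeasurable u μ) (hFm : AEMeasurable F μ) (hxy : x ≠ y)
    (ht : HasLebesgueValueAt μ u x t) (hs : HasLebesgueValueAt μ u y s) :
    ‖t - s‖ₑ ^ 2 ≤ jumpConst μ * (dyadicEnergy μ (finrank ℝ E - 1) (fun z => F z ^ 2) x y +
      dyadicEnergy μ (finrank ℝ E - 1) (fun z => F z ^ 2) y x) := by
  set a := ∑' j : ℕ, meanOsc μ u x (2 * dist x y / 2 ^ j)
  set b := ∑' j : ℕ, meanOsc μ u y (2 * dist x y / 2 ^ j) with hb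
  have add_sq_le : (a + b) ^ 2 ≤ 2 * (a ^ 2 + b ^ 2) := by
    simpa [show (2 : ℝ) - 1 = 1 by norm_num] using
      ENNReal.rpow_add_le_mul_rpow_add_rpow a b one_le_two
  calc ‖t - s‖ₑ ^ 2 ≤ (2 ^ finrank ℝ E * (1 + 2 ^ finrank ℝ E) * (a + b)) ^ 2 := by
        gcongr
        exact enorm_sub_le_tsum_meanOsc hu hxy ht hs
    _ ≤ (2 ^ finrank ℝ E * (1 + 2 ^ finrank ℝ E)) ^ 2 * (2 *
          (3 * poincareConst μ * dyadicEnergy μ (finrank ℝ E - 1) (fun z => F z ^ 2) x y +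
            3 * poincareConst μ * dyadicEnergy μ (finrank ℝ E - 1) (fun z => F z ^ 2) y x)) := by
        rw [mul_pow]
        grw [add_sq_le, hF.tsum_meanOsc_sq_le hu hFm hxy, hb, dist_comm x y,
          hF.tsum_meanOsc_sq_le hu hFm hxy.symm]
    _ = _ := by
        rw [jumpConst, show (6 : ℝ≥0∞) = 2 * 3 by norm_num]
        ring

theorem HasTranslationBound.ae_exists_hasLebesgueValueAt [SFinite σ] [NullSingletonClass σ]
    (hF : HasTranslationBound μ u F) (hu : AEStronglyMeasurable u μ) (hFm : Measurable F)
    (hfin : ∫⁻ p, edist p.1 p.2 ^ (-(d + 1)) *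
      dyadicEnergy μ (finrank ℝ E - 1) (fun z => F z ^ 2) p.1 p.2 ∂σ.prod σ ≠ ∞) :
    ∀ᵐ x ∂σ, ∃ t, HasLebesgueValueAt μ u x t := by
  have measurable_kernel := Measurable.mul (f := fun p : E × E => edist p.1 p.2 ^ (-(d + 1)))
    (by fun_prop) (measurable_dyadicEnergy (μ := μ) (s := finrank ℝ E - 1) (hFm.pow_const 2))
  filter_upwards [ae_exists_ne_and_ne_top measurable_kernel.aemeasurable hfin] with x hx
  obtain ⟨y, hxy, kernel_ne_top⟩ := hx
  have energy_ne_top : dyadicEnergy μ (finrank ℝ E - 1) (fun z => F z ^ 2) x y ≠ ∞ := by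
    intro htop
    refine kernel_ne_top ?_
    simp [htop, ENNReal.mul_top, edist_ne_top, hxy]
  have osc_ne_top : ∑' j : ℕ, meanOsc μ u x (2 * dist x y / 2 ^ j) ≠ ∞ := by
    have := poincareConst_ne_top μ
    refine (ENNReal.pow_ne_top_iff.1 (ne_top_of_le_ne_top ?_
      (hF.tsum_meanOsc_sq_le hu hFm.aemeasurable hxy))).resolve_right two_ne_zero
    finiteness
  have hdist : 0 < dist x y := dist_pos.2 hxy
  obtain ⟨t, ht, -⟩ := exists_hasLebesgueValueAt hu (by positivity) osc_ne_top
  exact ⟨t, ht⟩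

theorem HasTranslationBound.lintegral_lintegral_enorm_sub_sq_le [SFinite σ]
    (hF : HasTranslationBound μ u F) (hu : AEStronglyMeasurable u μ) (hFm : Measurable F)
    (hg : ∀ᵐ x ∂σ, HasLebesgueValueAt μ u x (g x)) :
    ∫⁻ x, ∫⁻ y, ‖g x - g y‖ₑ ^ 2 * edist x y ^ (-(d + 1)) ∂σ ∂σ ≤
      2 * jumpConst μ * ∫⁻ p, edist p.1 p.2 ^ (-(d + 1)) *
        dyadicEnergy μ (finrank ℝ E - 1) (fun z => F z ^ 2) p.1 p.2 ∂σ.prod σ := by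
  set w : E × E → ℝ≥0∞ := fun p => edist p.1 p.2 ^ (-(d + 1)) *
    dyadicEnergy μ (finrank ℝ E - 1) (fun z => F z ^ 2) p.1 p.2
  have hw : Measurable w :=
    Measurable.mul (by fun_prop) (measurable_dyadicEnergy (hFm.pow_const 2))
  have hw_symm : Measurable fun p => w p + w p.swap := hw.add (hw.comp measurable_swap)
  have pointwise (x y : E) (hx : HasLebesgueValueAt μ u x (g x))
      (hy : HasLebesgueValueAt μ u y (g y)) :
      ‖g x - g y‖ₑ ^ 2 * edist x y ^ (-(d + 1)) ≤
        jumpConst μ * (w (x, y) + w (x, y).swap) := by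
    rcases eq_or_ne x y with rfl | hxy
    · simp
    grw [hF.enorm_sub_sq_le hu hFm.aemeasurable hxy hx hy]
    simp only [w, Prod.swap_prod_mk, edist_comm y x]
    exact le_of_eq (by ring)
  calc ∫⁻ x, ∫⁻ y, ‖g x - g y‖ₑ ^ 2 * edist x y ^ (-(d + 1)) ∂σ ∂σ
      ≤ ∫⁻ x, ∫⁻ y, jumpConst μ * (w (x, y) + w (x, y).swap) ∂σ ∂σ := by
        refine lintegral_mono_ae (hg.mono fun x hx => lintegral_mono_ae (hg.mono fun y hy => ?_))
        exact pointwise x y hx hy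
    _ = ∫⁻ p, jumpConst μ * (w p + w p.swap) ∂σ.prod σ := by
        rw [lintegral_prod _ (hw_symm.const_mul _).aemeasurable]
    _ = 2 * jumpConst μ * ∫⁻ p, w p ∂σ.prod σ := by
        rw [lintegral_const_mul _ hw_symm, lintegral_prod_add_swap hw]
        ring

theorem HasTranslationBound.exists_trace {A : ℝ≥0} {Γ : Set E} (hF : HasTranslationBound μ u F)
    (hu : AEStronglyMeasurable u μ) (hFm : Measurable F) (hσ : UpperRegular σ A d) (hd : 0 < d)
    (hdE : d < finrank ℝ E - 1) (hσΓ : ∀ᵐ x ∂σ, x ∈ Γ) (hμΓ : ∀ᵐ z ∂μ, 0 < infDist z Γ)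
    (hfin : ∫⁻ z, F z ^ 2 * ENNReal.ofReal (infDist z Γ) ^ (d - (finrank ℝ E - 1)) ∂μ ≠ ∞) :
    ∃ g : E → G, (∀ᵐ x ∂σ, HasLebesgueValueAt μ u x (g x)) ∧
      ∫⁻ x, ∫⁻ y, ‖g x - g y‖ₑ ^ 2 * edist x y ^ (-(d + 1)) ∂σ ∂σ ≤ traceConst μ A d *
        ∫⁻ z, F z ^ 2 * ENNReal.ofReal (infDist z Γ) ^ (d - (finrank ℝ E - 1)) ∂μ := by
  have := hσ.isLocallyFiniteMeasure
  have := hσ.nullSingletonClass hd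
  have energy_le := hσ.lintegral_dyadicEnergy_le (μ := μ) (s := finrank ℝ E - 1) (by linarith)
    (by linarith) hσΓ hμΓ (hFm.pow_const 2)
  have energy_ne_top := ne_top_of_le_ne_top
    (ENNReal.mul_ne_top (kernelConst_ne_top A (hd.trans hdE) hdE) hfin) energy_le
  choose! g hg using fun x (hx : ∃ t, HasLebesgueValueAt μ u x t) => hx
  have hasLebesgueValueAt_g : ∀ᵐ x ∂σ, HasLebesgueValueAt μ u x (g x) :=
    (hF.ae_exists_hasLebesgueValueAt hu hFm energy_ne_top).mono hg
  refine ⟨g, hasLebesgueValueAt_g, ?_⟩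
  grw [hF.lintegral_lintegral_enorm_sub_sq_le hu hFm hasLebesgueValueAt_g, energy_le, traceConst]
  exact le_of_eq (by ring)

end HasTranslationBound

theorem setLIntegral_compl_measW {n : ℕ} {d : ℝ} {Γ : Set (Euc n)} (hcl : IsClosed Γ)
    (hne : Γ.Nonempty) (hΓ : volume Γ = 0) (f : Euc n → ℝ≥0∞) :
    ∫⁻ z in Γᶜ, f z ∂measW n d Γ =
      ∫⁻ z, f z * ENNReal.ofReal (infDist z Γ) ^ (d - ((n : ℝ) - 1)) := by
  have ae_mem : ∀ᵐ z ∂volume, z ∈ Γᶜ := measure_eq_zero_iff_ae_notMem.1 hΓ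
  have measurable_weight : Measurable fun z => ENNReal.ofReal (weightW n d Γ z) := by
    unfold weightW
    fun_prop
  rw [measW, setLIntegral_withDensity_eq_setLIntegral_mul_non_measurable _ measurable_weight _
    hcl.measurableSet.compl (Eventually.of_forall fun _ => ENNReal.ofReal_lt_top),
    Measure.restrict_eq_self_of_ae_mem ae_mem]
  refine lintegral_congr_ae (ae_mem.mono fun z hz => ?_)
  simp only [Pi.mul_apply]
  rw [weightW, ENNReal.ofReal_rpow_of_pos ((hcl.notMem_iff_infDist_pos hne).1 hz), mul_comm,
    sub_sub_eq_add_sub]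

theorem ofReal_abs_sub_sq_div_dist_rpow {X : Type*} [PseudoMetricSpace X] {d : ℝ} (hd : 0 ≤ d)
    (g : X → ℝ) (x y : X) :
    ENNReal.ofReal (|g x - g y| ^ 2) / ENNReal.ofReal (dist x y ^ (d + 1)) =
      ‖g x - g y‖ₑ ^ 2 * edist x y ^ (-(d + 1)) := by
  rw [ENNReal.ofReal_pow (abs_nonneg _), ← Real.enorm_eq_ofReal_abs, div_eq_mul_inv,
    ← ENNReal.ofReal_rpow_of_nonneg dist_nonneg (by positivity), ← edist_dist, ENNReal.rpow_neg]

theorem MemW.exists_trace {n : ℕ} {d : ℝ} {A : ℝ≥0} {Γ : Set (Euc n)} {σ : Measure (Euc n)}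
    {u : Euc n → ℝ} {v : Euc n → Euc n} (hW : MemW n d Γ u v) (hu : LocallyIntegrable u volume)
    (hd : 0 < d) (hdn : d < (n : ℝ) - 1) (hne : Γ.Nonempty) (hcl : IsClosed Γ)
    (hΓ : μH[(n : ℝ) - 1] Γ = 0) (hσ : UpperRegular σ A d) (hσΓ : ∀ᵐ x ∂σ, x ∈ Γ) :
    ∃ g : Euc n → ℝ, (∀ᵐ x ∂σ, HasLebesgueValueAt volume u x (g x)) ∧
      ∫⁻ x, ∫⁻ y, ENNReal.ofReal (|g x - g y| ^ 2) / ENNReal.ofReal (dist x y ^ (d + 1)) ∂σ ∂σ ≤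
        traceConst (volume : Measure (Euc n)) A d *
          ∫⁻ x in Γᶜ, ENNReal.ofReal (‖v x‖ ^ 2) ∂measW n d Γ := by
  have finrank_eq : (finrank ℝ (Euc n) : ℝ) = n := by rw [finrank_euclideanSpace_fin]
  rw [← finrank_eq] at hdn hΓ
  have volume_eq_zero : volume Γ = 0 := measure_eq_zero_of_hausdorffMeasure volume hΓ
  have ae_mem : ∀ᵐ z ∂volume, z ∈ Γᶜ := measure_eq_zero_iff_ae_notMem.1 volume_eq_zero
  have infDist_pos : ∀ᵐ z, 0 < infDist z Γ :=
    ae_mem.mono fun z hz => (hcl.notMem_iff_infDist_pos hne).1 hz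
  obtain ⟨F, measurable_F, enorm_v_eq⟩ := hW.gradLocInt.aestronglyMeasurable.enorm
  have energy_eq : ∫⁻ z in Γᶜ, ENNReal.ofReal (‖v z‖ ^ 2) ∂measW n d Γ =
      ∫⁻ z, F z ^ 2 * ENNReal.ofReal (infDist z Γ) ^ (d - ((finrank ℝ (Euc n) : ℝ) - 1)) := by
    rw [setLIntegral_compl_measW hcl hne volume_eq_zero, finrank_eq]
    rw [Measure.restrict_eq_self_of_ae_mem ae_mem] at enorm_v_eq
    refine lintegral_congr_ae (enorm_v_eq.mono fun z hz => ?_)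
    simp only [← hz, ENNReal.ofReal_pow (norm_nonneg _), ofReal_norm]
  simp_rw [energy_eq, ofReal_abs_sub_sq_div_dist_rpow hd.le]
  exact (hW.isGrad.hasTranslationBound hu measurable_F enorm_v_eq hcl hne hΓ).exists_trace
    hu.aestronglyMeasurable measurable_F hσ hd hdn hσΓ infDist_pos (energy_eq ▸ hW.l2.ne)

end Trace

theorem statement5_general (n : ℕ) (d : ℝ) (A : ℝ≥0) (hd0 : 0 < d) (hdn : d < (n : ℝ) - 1) :
    ∃ C : ℝ, 0 < C ∧
      ∀ Γ : Set (Euc n), Γ.Nonempty → IsClosed Γ → μH[(n : ℝ) - 1] Γ = 0 →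
        ∀ σ : Measure (Euc n), UpperRegular σ A d → (∀ᵐ x ∂σ, x ∈ Γ) →
          ∀ u v, MemW n d Γ u v → LocallyIntegrable u volume →
            ∃ g : Euc n → ℝ,
              (∀ᵐ x ∂σ, HasTraceAt u x (g x)) ∧
              (∀ᵐ x ∂σ,
                Tendsto (fun ρ : ℝ => ⨍ y in ball x ρ, |u y - g x|) (𝓝[>] (0 : ℝ)) (𝓝 0)) ∧
              ∫⁻ x, ∫⁻ y,
                  ENNReal.ofReal (|g x - g y| ^ 2) / ENNReal.ofReal (dist x y ^ (d + 1)) ∂σ ∂σ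
                ≤ ENNReal.ofReal C * ∫⁻ x in Γᶜ, ENNReal.ofReal (‖v x‖ ^ 2) ∂(measW n d Γ) := by
  set Q := traceConst (volume : Measure (Euc n)) A d
  have Q_ne_top : Q ≠ ∞ :=
    traceConst_ne_top volume A hd0 (by rwa [finrank_euclideanSpace_fin])
  have Q_le : Q ≤ ENNReal.ofReal (Q.toReal + 1) :=
    (ENNReal.ofReal_toReal Q_ne_top).ge.trans (ENNReal.ofReal_le_ofReal (by linarith))
  refine ⟨Q.toReal + 1, by positivity, fun Γ hne hcl hΓ σ hσ hσΓ u v hW hu => ?_⟩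
  obtain ⟨g, hasLebesgueValueAt_g, energy_le⟩ := hW.exists_trace hu hd0 hdn hne hcl hΓ hσ hσΓ
  exact ⟨g, hasLebesgueValueAt_g.mono fun x hx => hx.tendsto_setAverage hu,
    hasLebesgueValueAt_g.mono fun x hx => hx.tendsto_setAverage_norm_sub hu.aestronglyMeasurable,
    energy_le.trans (by gcongr)⟩

/-- the trace theorem. -/
theorem statement5 (n : ℕ) (hn : 2 ≤ n) (d C₀ : ℝ) (hd0 : 0 < d)
    (hdn : d < (n : ℝ) - 1) (hC₀ : 1 ≤ C₀) :
    ∃ C : ℝ, 0 < C ∧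
      ∀ Γ : Set (Euc n), Γ.Nonempty → IsClosed Γ → AhlforsRegular n d C₀ Γ →
        ∀ u v, MemW n d Γ u v → LocallyIntegrable u volume →
          ∃ g : Euc n → ℝ,
            (∀ᵐ x ∂(μH[d].restrict Γ), HasTraceAt u x (g x)) ∧
            (∀ᵐ x ∂(μH[d].restrict Γ),
              Tendsto (fun ρ : ℝ => ⨍ y in ball x ρ, |u y - g x|) (𝓝[>] (0 : ℝ)) (𝓝 0)) ∧
            ∫⁻ x in Γ, ∫⁻ y in Γ,
                ENNReal.ofReal (|g x - g y| ^ 2) / ENNReal.ofReal (dist x y ^ (d + 1))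
                  ∂(μH[d]) ∂(μH[d])
              ≤ ENNReal.ofReal C * ∫⁻ x in Γᶜ, ENNReal.ofReal (‖v x‖ ^ 2) ∂(measW n d Γ) := by
  obtain ⟨C, hC, trace⟩ := statement5_general n d (Real.toNNReal (C₀ * 2 ^ d)) hd0 hdn
  refine ⟨C, hC, fun Γ hne hcl hΓ => ?_⟩
  have hσ := hΓ.upperRegular
  exact trace Γ hne hcl (hσ.hausdorffMeasure_eq_zero hdn) _ hσ (ae_restrict_mem hcl.measurableSet)
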